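/- Entropic hypocoercivity for the linear relaxation Boltzmann equation: there exist positive constants Λ, α, β, γ (depending only on λ, not on the dimension d) such that for every smooth h : [0,∞) × 𝕋^d × ℝ^d → ℝ that is bounded above and below by positive constants, has all partial derivatives bounded, satisfies ∫ h(t,·) dμ = 1 for all t, and solves ∂_t h + v·∇_x h = λ(Πh − h), one has for all t ≥ 0: I(h_t) + β H_Π(h_t) ≤ exp(−Λt) (α I(h_0) + 2β H_Π(h_0)), and consequently H(h_t) ≤ γ exp(−Λt) I(h_0). -/

import Mathlib

/-!
The proof is a hypocoercivity argument for the Lyapunov functional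
`E(t) = ∫ (a |∇ₓ h|² + 2 ∇ₓ h · ∇ᵥ h + 2 |∇ᵥ h|²) / h dμ + β H_Π(h)`.

*Dissipation.* Write `ρ = Πh` and `D = ∂ₜ + v · ∇ₓ`. Differentiating the equation gives
`D h = λ (ρ - h)`, `D ∂ₓh = λ (∂ₓρ - ∂ₓh)` and `D ∂ᵥh = -λ ∂ᵥh - ∂ₓh`. Since `μ` is invariant under
transport, the derivative of a mean is the mean of the material derivative. The projected entropy is
`∫ h log ρ dμ`; by Gaussian integration by parts its derivative is `∫ ∇ᵥ h · ∇ₓ ρ / ρ dμ`. Modulo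
terms that average to zero over the velocity, the material derivative of the density of `E` splits
coordinatewise, and in terms of `x = ∂ₓh / h`, `y = ∂ᵥh / h`, `z = ∂ₓρ / ρ` it equals
`-h (2 x² + λ y²)` minus two quadratic forms in `(x - z, y)`, which are nonnegative for the chosen
`a` and `β`. Hence `E' ≤ -(2 ∫ |∇ₓ h|² / h dμ + λ ∫ |∇ᵥ h|² / h dμ)`.

*Logarithmic Sobolev inequalities.* On `[0,1]` the inequality follows from the bound of the entropy
by the `χ²`-divergence and of the oscillation by `∫ |f'|`. Inequalities of this kind tensorize, are
transported by affine maps and pass to weak limits, so the central limit theorem yields the Gaussian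
one with constant 12. The constants do not depend on the dimension.

*Conclusion.* The inequality on the torus and Cauchy–Schwarz give `H_Π ≤ ∫ |∇ₓ h|² / h dμ`, so `E`
is bounded by a multiple of its own dissipation, and Grönwall's lemma gives exponential decay of
`E`. The form defining `E` is comparable to `|∇ₓ h|² + |∇ᵥ h|²`, which is the first claim; the
second one follows from `H ≤ 12 I` on phase space and `0 ≤ H_Π ≤ I`.
-/

open MeasureTheory Real Filter

noncomputable section

/-- The standard Gaussian density `ℳ(v) = (2π)^{-d/2} exp(-|v|²/2)` on `ℝ^d`. -/
def gauss (d : ℕ) (v : Fin d → ℝ) : ℝ :=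
  (2 * Real.pi) ^ (-(d : ℝ) / 2) * Real.exp (-(∑ i, v i ^ 2) / 2)

/-- Fundamental domain `[0,1]^d` of the torus `𝕋^d`; the normalized Lebesgue measure on
the torus is the restriction of Lebesgue measure to this cube. -/
def cube (d : ℕ) : Set (Fin d → ℝ) := Set.Icc 0 1

/-- A function of `(x,v)` represents a function on `𝕋^d × ℝ^d` iff it is `ℤ^d`-periodic in `x`. -/
def IsPeriodic (d : ℕ) (f : (Fin d → ℝ) → (Fin d → ℝ) → ℝ) : Prop :=
  ∀ (x v : Fin d → ℝ) (k : Fin d → ℤ), f (x + fun i => (k i : ℝ)) v = f x v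

/-- The projection `Πf(x) = ∫ f(x,u) ℳ(u) du`. -/
def proj (d : ℕ) (f : (Fin d → ℝ) → (Fin d → ℝ) → ℝ) (x : Fin d → ℝ) : ℝ :=
  ∫ u, f x u * gauss d u

/-- Euclidean dot product on `ℝ^d`. -/
def dotp (d : ℕ) (a b : Fin d → ℝ) : ℝ := ∑ i, a i * b i

/-- Squared Euclidean norm on `ℝ^d`. -/
def nsq (d : ℕ) (a : Fin d → ℝ) : ℝ := ∑ i, a i ^ 2

/-- Gradient in the `x` variable. -/
def gradx (d : ℕ) (f : (Fin d → ℝ) → (Fin d → ℝ) → ℝ) (x v : Fin d → ℝ) : Fin d → ℝ :=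
  fun i => fderiv ℝ (fun y => f y v) x (Pi.single i 1)

/-- Gradient in the `v` variable. -/
def gradv (d : ℕ) (f : (Fin d → ℝ) → (Fin d → ℝ) → ℝ) (x v : Fin d → ℝ) : Fin d → ℝ :=
  fun i => fderiv ℝ (fun w => f x w) v (Pi.single i 1)

/-- Gradient of a function of `x` only. -/
def grad1 (d : ℕ) (g : (Fin d → ℝ) → ℝ) (x : Fin d → ℝ) : Fin d → ℝ :=
  fun i => fderiv ℝ g x (Pi.single i 1)

/-- Laplacian in the `v` variable. -/
def lapv (d : ℕ) (f : (Fin d → ℝ) → (Fin d → ℝ) → ℝ) (x v : Fin d → ℝ) : ℝ :=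
  ∑ i, fderiv ℝ (fun w => gradv d f x w i) v (Pi.single i 1)

/-- Integral against `μ = ℳ(v) dv dx` on `𝕋^d × ℝ^d`. -/
def intMu (d : ℕ) (F : (Fin d → ℝ) → (Fin d → ℝ) → ℝ) : ℝ :=
  ∫ x in cube d, ∫ v, F x v * gauss d v

/-- `I^X(h) = ∫ |∇_x h|²/h dμ`. -/
def IX (d : ℕ) (h : (Fin d → ℝ) → (Fin d → ℝ) → ℝ) : ℝ :=
  intMu d fun x v => nsq d (gradx d h x v) / h x v

/-- `I^V(h) = ∫ |∇_v h|²/h dμ`. -/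
def IV (d : ℕ) (h : (Fin d → ℝ) → (Fin d → ℝ) → ℝ) : ℝ :=
  intMu d fun x v => nsq d (gradv d h x v) / h x v

/-- `I^M(h) = ∫ (∇_x h · ∇_v h)/h dμ`. -/
def IM (d : ℕ) (h : (Fin d → ℝ) → (Fin d → ℝ) → ℝ) : ℝ :=
  intMu d fun x v => dotp d (gradx d h x v) (gradv d h x v) / h x v

/-- The full Fisher information `I(h) = ∫ |∇_{x,v} h|²/h dμ`. -/
def Ifull (d : ℕ) (h : (Fin d → ℝ) → (Fin d → ℝ) → ℝ) : ℝ :=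
  intMu d fun x v => (nsq d (gradx d h x v) + nsq d (gradv d h x v)) / h x v

/-- `I^{ΠX}(h) = ∫_{𝕋^d} |∇_x Πh|²/Πh dx`. -/
def IPiX (d : ℕ) (h : (Fin d → ℝ) → (Fin d → ℝ) → ℝ) : ℝ :=
  ∫ x in cube d, nsq d (grad1 d (proj d h) x) / proj d h x

/-- `I^{ΠX/X}(h) = ∫ (|∇_x(Πh/h)|²/(Πh/h)) h dμ`. -/
def IPiXX (d : ℕ) (h : (Fin d → ℝ) → (Fin d → ℝ) → ℝ) : ℝ :=
  intMu d fun x v =>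
    nsq d (gradx d (fun y w => proj d h y / h y w) x v) / (proj d h x / h x v) * h x v

/-- `I^{ΠV/V}(h) = ∫ (|∇_v h|²/h)(Πh/h) dμ`. -/
def IPiVV (d : ℕ) (h : (Fin d → ℝ) → (Fin d → ℝ) → ℝ) : ℝ :=
  intMu d fun x v => nsq d (gradv d h x v) / h x v * (proj d h x / h x v)

/-- The relative entropy `H(h) = ∫ h log h dμ`. -/
def Hent (d : ℕ) (h : (Fin d → ℝ) → (Fin d → ℝ) → ℝ) : ℝ :=
  intMu d fun x v => h x v * Real.log (h x v)

/-- The projected entropy `H_Π(h) = ∫_{𝕋^d} Πh log Πh dx`. -/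
def HPi (d : ℕ) (h : (Fin d → ℝ) → (Fin d → ℝ) → ℝ) : ℝ :=
  ∫ x in cube d, proj d h x * Real.log (proj d h x)

/-- The local average speed `U(x) = ∫ v h(x,v) ℳ(v) dv`. -/
def Uvec (d : ℕ) (h : (Fin d → ℝ) → (Fin d → ℝ) → ℝ) (x : Fin d → ℝ) : Fin d → ℝ :=
  fun i => ∫ v, v i * h x v * gauss d v

/-- The divergence `∇_x · U`. -/
def divU (d : ℕ) (h : (Fin d → ℝ) → (Fin d → ℝ) → ℝ) (x : Fin d → ℝ) : ℝ :=
  ∑ i, fderiv ℝ (fun y => Uvec d h y i) x (Pi.single i 1)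

/-- The `p`-entropy `H^{(p)}(h) = ∫ (h^p - h)/(p(p-1)) dμ`. -/
def Hp (d : ℕ) (p : ℝ) (h : (Fin d → ℝ) → (Fin d → ℝ) → ℝ) : ℝ :=
  intMu d fun x v => (h x v ^ p - h x v) / (p * (p - 1))

/-- The projected `p`-entropy `H_Π^{(p)}(h) = ∫_{𝕋^d} ((Πh)^p - Πh)/(p(p-1)) dx`. -/
def HpPi (d : ℕ) (p : ℝ) (h : (Fin d → ℝ) → (Fin d → ℝ) → ℝ) : ℝ :=
  ∫ x in cube d, ((proj d h x) ^ p - proj d h x) / (p * (p - 1))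

/-- The `p`-Fisher information `I^{(p)}(h) = ∫ h^{p-2} |∇_{x,v} h|² dμ`. -/
def Ipfull (d : ℕ) (p : ℝ) (h : (Fin d → ℝ) → (Fin d → ℝ) → ℝ) : ℝ :=
  intMu d fun x v => h x v ^ (p - 2) * (nsq d (gradx d h x v) + nsq d (gradv d h x v))

/-- The spatial `p`-Fisher information `∫ h^{p-2} |∇_x h|² dμ`. -/
def IpX (d : ℕ) (p : ℝ) (h : (Fin d → ℝ) → (Fin d → ℝ) → ℝ) : ℝ :=
  intMu d fun x v => h x v ^ (p - 2) * nsq d (gradx d h x v)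

/-- Regularity of a time-dependent `h`: smooth, periodic in `x`, bounded above and below by
positive constants, with all partial derivatives bounded. -/
def Regular (d : ℕ) (h : ℝ → (Fin d → ℝ) → (Fin d → ℝ) → ℝ) : Prop :=
  ContDiff ℝ (⊤ : ℕ∞) (fun q : ℝ × (Fin d → ℝ) × (Fin d → ℝ) => h q.1 q.2.1 q.2.2) ∧
  (∀ t, IsPeriodic d (h t)) ∧
  (∃ c C : ℝ, 0 < c ∧ ∀ t x v, c ≤ h t x v ∧ h t x v ≤ C) ∧
  (∀ n : ℕ, ∃ C : ℝ, ∀ q : ℝ × (Fin d → ℝ) × (Fin d → ℝ),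
    ‖iteratedFDeriv ℝ n (fun r : ℝ × (Fin d → ℝ) × (Fin d → ℝ) => h r.1 r.2.1 r.2.2) q‖ ≤ C)

/-- Regularity of a time-independent `h`: smooth, periodic in `x`, bounded above and below by
positive constants, with bounded gradient. -/
def RegularStatic (d : ℕ) (h : (Fin d → ℝ) → (Fin d → ℝ) → ℝ) : Prop :=
  ContDiff ℝ (⊤ : ℕ∞) (fun q : (Fin d → ℝ) × (Fin d → ℝ) => h q.1 q.2) ∧
  IsPeriodic d h ∧
  (∃ c C : ℝ, 0 < c ∧ ∀ x v, c ≤ h x v ∧ h x v ≤ C) ∧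
  (∃ C : ℝ, ∀ q : (Fin d → ℝ) × (Fin d → ℝ),
    ‖fderiv ℝ (fun r : (Fin d → ℝ) × (Fin d → ℝ) => h r.1 r.2) q‖ ≤ C)

/-- `h` solves the linear relaxation Boltzmann equation `∂_t h + v·∇_x h = λ(Πh - h)` for `t ≥ 0`. -/
def SolvesLRB (d : ℕ) (lam : ℝ) (h : ℝ → (Fin d → ℝ) → (Fin d → ℝ) → ℝ) : Prop :=
  ∀ t x v, 0 ≤ t →
    deriv (fun s => h s x v) t + dotp d v (gradx d (h t) x v)
      = lam * (proj d (h t) x - h t x v)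

/-- `h` solves the free transport equation `∂_t h + v·∇_x h = 0` for `t ≥ 0`. -/
def SolvesTransport (d : ℕ) (h : ℝ → (Fin d → ℝ) → (Fin d → ℝ) → ℝ) : Prop :=
  ∀ t x v, 0 ≤ t →
    deriv (fun s => h s x v) t + dotp d v (gradx d (h t) x v) = 0

/-- `h` solves the pure relaxation equation `∂_t h = λ(Πh - h)` for `t ≥ 0`. -/
def SolvesCollision (d : ℕ) (lam : ℝ) (h : ℝ → (Fin d → ℝ) → (Fin d → ℝ) → ℝ) : Prop :=
  ∀ t x v, 0 ≤ t →
    deriv (fun s => h s x v) t = lam * (proj d (h t) x - h t x v)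

/-- `h` solves the kinetic Fokker–Planck equation `∂_t h + v·∇_x h = Δ_v h - v·∇_v h` for `t ≥ 0`. -/
def SolvesKFP (d : ℕ) (h : ℝ → (Fin d → ℝ) → (Fin d → ℝ) → ℝ) : Prop :=
  ∀ t x v, 0 ≤ t →
    deriv (fun s => h s x v) t + dotp d v (gradx d (h t) x v)
      = lapv d (h t) x v - dotp d v (gradv d (h t) x v)

/-! ### Bounded functions with bounded derivatives -/

/-- Bounded continuous real functions, unbundled so that closure properties apply to lambda
terms. -/
structure BddCont {E : Type*} [TopologicalSpace E] (f : E → ℝ) : Prop where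
  continuous : Continuous f
  bdd : ∃ C, ∀ x, |f x| ≤ C

namespace BddCont

variable {E F : Type*} [TopologicalSpace E] [TopologicalSpace F] {f g : E → ℝ}

theorem const (c : ℝ) : BddCont fun _ : E => c := ⟨continuous_const, |c|, fun _ => le_rfl⟩

theorem add (hf : BddCont f) (hg : BddCont g) : BddCont fun x => f x + g x := by
  obtain ⟨A, hA⟩ := hf.bdd
  obtain ⟨B, hB⟩ := hg.bdd
  exact ⟨hf.continuous.add hg.continuous, A + B,
    fun x => (abs_add_le _ _).trans (add_le_add (hA x) (hB x))⟩

theorem mul (hf : BddCont f) (hg : BddCont g) : BddCont fun x => f x * g x := by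
  obtain ⟨A, hA⟩ := hf.bdd
  obtain ⟨B, hB⟩ := hg.bdd
  refine ⟨hf.continuous.mul hg.continuous, A * B, fun x => ?_⟩
  rw [abs_mul]
  exact mul_le_mul (hA x) (hB x) (abs_nonneg _) ((abs_nonneg _).trans (hA x))

theorem sub (hf : BddCont f) (hg : BddCont g) : BddCont fun x => f x - g x := by
  simpa [sub_eq_add_neg] using hf.add ((const (-1)).mul hg)

theorem sum {ι : Type*} (s : Finset ι) {f : ι → E → ℝ} (hf : ∀ i, BddCont (f i)) :
    BddCont fun x => ∑ i ∈ s, f i x := by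
  classical
  induction s using Finset.induction_on with
  | empty => simpa using const 0
  | insert i s hi ih => simpa [Finset.sum_insert hi] using (hf i).add ih

theorem pow (hf : BddCont f) (n : ℕ) : BddCont fun x => f x ^ n := by
  induction n with
  | zero => simpa using const 1
  | succ n ih => simpa [pow_succ] using ih.mul hf

theorem comp {f : F → ℝ} (hf : BddCont f) {φ : E → F} (hφ : Continuous φ) :
    BddCont fun x => f (φ x) :=
  ⟨hf.continuous.comp hφ, hf.bdd.imp fun _ hC x => hC (φ x)⟩

theorem integrable [SecondCountableTopology E] [MeasurableSpace E] [OpensMeasurableSpace E]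
    {μ : Measure E} [IsFiniteMeasure μ] (hf : BddCont f) : Integrable f μ := by
  obtain ⟨C, hC⟩ := hf.bdd
  exact .of_bound hf.continuous.aestronglyMeasurable C (.of_forall hC)

end BddCont

/-- Bounded continuously differentiable functions with bounded derivative. -/
structure BddC1 {E : Type*} [NormedAddCommGroup E] [NormedSpace ℝ E] (f : E → ℝ) : Prop where
  contDiff : ContDiff ℝ 1 f
  bdd : ∃ C, ∀ x, |f x| ≤ C
  bdd_fderiv : ∃ C, ∀ x, ‖fderiv ℝ f x‖ ≤ C

/-- The functions of class `BddC1` bounded below by a positive constant: the densities for which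
entropies and Fisher informations are considered. -/
structure BddC1Pos {E : Type*} [NormedAddCommGroup E] [NormedSpace ℝ E] (f : E → ℝ) : Prop
    extends BddC1 f where
  exists_pos_le : ∃ c > 0, ∀ x, c ≤ f x

/-- The functions of class `BddC1` all of whose directional derivatives are of class `BddC1`. -/
structure BddC2 {E : Type*} [NormedAddCommGroup E] [NormedSpace ℝ E] (f : E → ℝ) : Prop
    extends BddC1 f where
  fderiv_apply : ∀ e, BddC1 fun x => fderiv ℝ f x e

section Closure

variable {E F : Type*} [NormedAddCommGroup E] [NormedSpace ℝ E]
  [NormedAddCommGroup F] [NormedSpace ℝ F] {f g : E → ℝ}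

theorem norm_smul_le_mul_of_le {r a b : ℝ} {x : E} (hr : ‖r‖ ≤ a) (hx : ‖x‖ ≤ b) :
    ‖r • x‖ ≤ a * b := by
  rw [norm_smul]
  exact mul_le_mul hr hx (norm_nonneg x) ((norm_nonneg r).trans hr)

namespace BddC1

theorem bddCont (hf : BddC1 f) : BddCont f := ⟨hf.contDiff.continuous, hf.bdd⟩

theorem differentiable (hf : BddC1 f) : Differentiable ℝ f :=
  hf.contDiff.differentiable one_ne_zero

theorem continuous_fderiv (hf : BddC1 f) : Continuous (fderiv ℝ f) :=
  hf.contDiff.continuous_fderiv one_ne_zero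

theorem bddCont_fderiv_apply (hf : BddC1 f) (e : E) : BddCont fun x => fderiv ℝ f x e := by
  obtain ⟨C, hC⟩ := hf.bdd_fderiv
  exact ⟨hf.continuous_fderiv.clm_apply continuous_const, C * ‖e‖,
    fun x => (fderiv ℝ f x).le_of_opNorm_le (hC x) e⟩

theorem integrable [SecondCountableTopology E] [MeasurableSpace E] [OpensMeasurableSpace E]
    {μ : Measure E} [IsFiniteMeasure μ] (hf : BddC1 f) : Integrable f μ :=
  hf.bddCont.integrable

theorem const (c : ℝ) : BddC1 fun _ : E => c :=
  ⟨contDiff_const, (BddCont.const (E := E) c).bdd, 0, fun x => by simp⟩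

theorem add (hf : BddC1 f) (hg : BddC1 g) : BddC1 fun x => f x + g x := by
  obtain ⟨A, hA⟩ := hf.bdd_fderiv
  obtain ⟨B, hB⟩ := hg.bdd_fderiv
  refine ⟨hf.contDiff.add hg.contDiff, (hf.bddCont.add hg.bddCont).bdd, A + B, fun x => ?_⟩
  rw [fderiv_fun_add (hf.differentiable x) (hg.differentiable x)]
  exact norm_add_le_of_le (hA x) (hB x)

theorem mul (hf : BddC1 f) (hg : BddC1 g) : BddC1 fun x => f x * g x := by
  obtain ⟨A, hA⟩ := hf.bdd
  obtain ⟨B, hB⟩ := hg.bdd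
  obtain ⟨A', hA'⟩ := hf.bdd_fderiv
  obtain ⟨B', hB'⟩ := hg.bdd_fderiv
  refine ⟨hf.contDiff.mul hg.contDiff, (hf.bddCont.mul hg.bddCont).bdd, A * B' + B * A',
    fun x => ?_⟩
  rw [fderiv_fun_mul (hf.differentiable x) (hg.differentiable x)]
  exact norm_add_le_of_le
    (norm_smul_le_mul_of_le (hA x) (hB' x)) (norm_smul_le_mul_of_le (hB x) (hA' x))

theorem const_mul (c : ℝ) (hf : BddC1 f) : BddC1 fun x => c * f x := (const c).mul hf

theorem sub (hf : BddC1 f) (hg : BddC1 g) : BddC1 fun x => f x - g x := by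
  simpa [sub_eq_add_neg] using hf.add (hg.const_mul (-1))

theorem sq (hf : BddC1 f) : BddC1 fun x => f x ^ 2 := by
  simpa only [_root_.sq] using hf.mul hf

theorem hasFDerivAt_comp_affine {f : F → ℝ} (hf : BddC1 f) (A : E →L[ℝ] F) (b : F) (x : E) :
    HasFDerivAt (fun y => f (A y + b)) ((fderiv ℝ f (A x + b)).comp A) x :=
  HasFDerivAt.comp x (hf.differentiable (A x + b)).hasFDerivAt (A.hasFDerivAt.add_const b)

theorem comp_affine {f : F → ℝ} (hf : BddC1 f) (A : E →L[ℝ] F) (b : F) :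
    BddC1 fun x => f (A x + b) := by
  obtain ⟨C, hC⟩ := hf.bdd_fderiv
  refine ⟨hf.contDiff.comp (A.contDiff.add contDiff_const),
    (hf.bddCont.comp (A.continuous.add continuous_const)).bdd, C * ‖A‖, fun x => ?_⟩
  rw [(hf.hasFDerivAt_comp_affine A b x).fderiv]
  exact (ContinuousLinearMap.opNorm_comp_le _ _).trans
    (mul_le_mul_of_nonneg_right (hC _) (norm_nonneg _))

theorem fderiv_comp_clm {f : F → ℝ} (hf : BddC1 f) (A : E →L[ℝ] F) (x e : E) :
    fderiv ℝ (fun y => f (A y)) x e = fderiv ℝ f (A x) (A e) := by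
  simpa using DFunLike.congr_fun (hf.hasFDerivAt_comp_affine A 0 x).fderiv e

theorem slice_right {G : E × F → ℝ} (hG : BddC1 G) (x : E) : BddC1 fun z => G (x, z) := by
  simpa using hG.comp_affine (.inr ℝ E F) (x, 0)

theorem slice_left {G : E × F → ℝ} (hG : BddC1 G) (z : F) : BddC1 fun x => G (x, z) := by
  simpa using hG.comp_affine (.inl ℝ E F) (0, z)

theorem fderiv_slice_right {G : E × F → ℝ} (hG : BddC1 G) (x : E) (z w : F) :
    fderiv ℝ (fun z => G (x, z)) z w = fderiv ℝ G (x, z) (0, w) := by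
  simpa using DFunLike.congr_fun (hG.hasFDerivAt_comp_affine (.inr ℝ E F) (x, 0) z).fderiv w

theorem fderiv_slice_left {G : E × F → ℝ} (hG : BddC1 G) (x e : E) (z : F) :
    fderiv ℝ (fun x => G (x, z)) x e = fderiv ℝ G (x, z) (e, 0) := by
  simpa using DFunLike.congr_fun (hG.hasFDerivAt_comp_affine (.inl ℝ E F) (0, z) x).fderiv e

end BddC1

namespace BddC1Pos

theorem pos (hf : BddC1Pos f) (x : E) : 0 < f x := by
  obtain ⟨c, hc, hcf⟩ := hf.exists_pos_le
  exact hc.trans_le (hcf x)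

/-- The values of `f` range in a compact subset of `(0, ∞)`, on which `φ` and `φ'` are bounded. -/
theorem comp_contDiffOn (hf : BddC1Pos f) {φ : ℝ → ℝ} (hφ : ContDiffOn ℝ 1 φ (Set.Ioi 0)) :
    BddC1 fun x => φ (f x) := by
  obtain ⟨c, hc, hcf⟩ := hf.exists_pos_le
  obtain ⟨C, hC⟩ := hf.bdd
  obtain ⟨C', hC'⟩ := hf.bdd_fderiv
  have hsub : Set.Icc c C ⊆ Set.Ioi 0 := fun y hy => hc.trans_le hy.1
  have hmem (x : E) : f x ∈ Set.Icc c C := ⟨hcf x, (le_abs_self _).trans (hC x)⟩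
  obtain ⟨A, hA⟩ := isCompact_Icc.exists_bound_of_continuousOn (hφ.continuousOn.mono hsub)
  obtain ⟨A', hA'⟩ := isCompact_Icc.exists_bound_of_continuousOn
    ((hφ.continuousOn_deriv_of_isOpen isOpen_Ioi le_rfl).mono hsub)
  have hφ_at (x : E) : ContDiffAt ℝ 1 φ (f x) := hφ.contDiffAt (Ioi_mem_nhds (hf.pos x))
  refine ⟨contDiff_iff_contDiffAt.2 fun x => (hφ_at x).comp x hf.contDiff.contDiffAt,
    ⟨A, fun x => hA _ (hmem x)⟩, A' * C', fun x => ?_⟩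
  have hderiv : HasFDerivAt (fun x => φ (f x)) (deriv φ (f x) • fderiv ℝ f x) x :=
    ((hφ_at x).differentiableAt one_ne_zero).hasDerivAt.comp_hasFDerivAt x
      (hf.differentiable x).hasFDerivAt
  rw [hderiv.fderiv]
  exact norm_smul_le_mul_of_le (hA' _ (hmem x)) (hC' x)

theorem log (hf : BddC1Pos f) : BddC1 fun x => Real.log (f x) :=
  hf.comp_contDiffOn (contDiffOn_log.mono fun _ hx => hx.ne')

theorem inv (hf : BddC1Pos f) : BddC1 fun x => (f x)⁻¹ :=
  hf.comp_contDiffOn ((contDiffOn_inv ℝ).mono fun _ hx => hx.ne')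

theorem mul_log (hf : BddC1Pos f) : BddC1 fun x => f x * Real.log (f x) := hf.toBddC1.mul hf.log

theorem comp_affine {f : F → ℝ} (hf : BddC1Pos f) (A : E →L[ℝ] F) (b : F) :
    BddC1Pos fun x => f (A x + b) :=
  ⟨hf.toBddC1.comp_affine A b, hf.exists_pos_le.imp fun _ hc => ⟨hc.1, fun _ => hc.2 _⟩⟩

theorem comp_clm {f : F → ℝ} (hf : BddC1Pos f) (A : E →L[ℝ] F) : BddC1Pos fun x => f (A x) := by
  simpa using hf.comp_affine A 0

theorem slice_right {G : E × F → ℝ} (hG : BddC1Pos G) (x : E) : BddC1Pos fun z => G (x, z) := by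
  simpa using hG.comp_affine (.inr ℝ E F) (x, 0)

end BddC1Pos

namespace BddC2

theorem contDiff_two [FiniteDimensional ℝ E] (hf : BddC2 f) : ContDiff ℝ 2 f :=
  (contDiff_succ_iff_fderiv_apply (n := 1)).2
    ⟨hf.differentiable, by simp, fun e => (hf.fderiv_apply e).contDiff⟩

theorem of_norm_iteratedFDeriv_le (hf : ContDiff ℝ 2 f)
    (hbdd : ∀ n : ℕ, n ≤ 2 → ∃ C, ∀ x, ‖iteratedFDeriv ℝ n f x‖ ≤ C) : BddC2 f := by
  obtain ⟨C₀, hC₀⟩ := hbdd 0 (by norm_num)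
  obtain ⟨C₁, hC₁⟩ := hbdd 1 (by norm_num)
  obtain ⟨C₂, hC₂⟩ := hbdd 2 le_rfl
  have hbdd_fderiv (x : E) : ‖fderiv ℝ f x‖ ≤ C₁ :=
    (norm_iteratedFDeriv_one f).symm.trans_le (hC₁ x)
  have hbdd_fderiv₂ (x : E) : ‖fderiv ℝ (fderiv ℝ f) x‖ ≤ C₂ := by
    rw [← norm_iteratedFDeriv_one, norm_iteratedFDeriv_fderiv]
    exact hC₂ x
  have hfderiv : ContDiff ℝ 1 (fderiv ℝ f) := hf.fderiv_right (m := 1) (by norm_num)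
  refine ⟨⟨hf.of_le one_le_two, ⟨C₀, fun x => norm_iteratedFDeriv_zero.symm.trans_le (hC₀ x)⟩,
    ⟨C₁, hbdd_fderiv⟩⟩, fun e => ⟨hfderiv.clm_apply contDiff_const,
    ⟨C₁ * ‖e‖, fun x => (fderiv ℝ f x).le_of_opNorm_le (hbdd_fderiv x) e⟩,
    ⟨‖ContinuousLinearMap.apply ℝ ℝ e‖ * C₂, fun x => ?_⟩⟩⟩
  have hderiv : HasFDerivAt (fun x => fderiv ℝ f x e)
      ((ContinuousLinearMap.apply ℝ ℝ e).comp (fderiv ℝ (fderiv ℝ f) x)) x :=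
    (ContinuousLinearMap.apply ℝ ℝ e).hasFDerivAt.comp x
      (hfderiv.differentiable one_ne_zero x).hasFDerivAt
  rw [hderiv.fderiv]
  exact (ContinuousLinearMap.opNorm_comp_le _ _).trans
    (mul_le_mul_of_nonneg_left (hbdd_fderiv₂ x) (norm_nonneg _))

end BddC2

end Closure

section Average

variable {E F : Type*} [NormedAddCommGroup E] [NormedSpace ℝ E] [NormedAddCommGroup F]
  [NormedSpace ℝ F] {G : E × F → ℝ}

namespace BddC1

theorem exists_bound_fderiv_comp_inl (hG : BddC1 G) :
    ∃ C, ∀ x z, ‖(fderiv ℝ G (x, z)).comp (.inl ℝ E F)‖ ≤ C := by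
  obtain ⟨C, hC⟩ := hG.bdd_fderiv
  exact ⟨C * ‖ContinuousLinearMap.inl ℝ E F‖, fun x z =>
    (ContinuousLinearMap.opNorm_comp_le _ _).trans
      (mul_le_mul_of_nonneg_right (hC _) (norm_nonneg _))⟩

variable [SecondCountableTopology F] [MeasurableSpace F] [BorelSpace F] (μ : Measure F)
  [IsFiniteMeasure μ]

theorem integrable_fderiv_comp_inl (hG : BddC1 G) (x : E) :
    Integrable (fun z => (fderiv ℝ G (x, z)).comp (.inl ℝ E F)) μ := by
  have : SecondCountableTopologyEither F (E →L[ℝ] ℝ) := secondCountableTopologyEither_of_left F _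
  obtain ⟨C, hC⟩ := hG.exists_bound_fderiv_comp_inl
  exact .of_bound (((hG.continuous_fderiv.comp (.prodMk_right x)).clm_comp
    continuous_const).aestronglyMeasurable) C (.of_forall (hC x))

theorem hasFDerivAt_average (hG : BddC1 G) (x : E) :
    HasFDerivAt (fun x => ∫ z, G (x, z) ∂μ)
      (∫ z, (fderiv ℝ G (x, z)).comp (.inl ℝ E F) ∂μ) x := by
  obtain ⟨C, hC⟩ := hG.exists_bound_fderiv_comp_inl
  exact hasFDerivAt_integral_of_dominated_of_fderiv_le (F := fun x z => G (x, z)) univ_mem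
    (.of_forall fun x => (hG.slice_right x).integrable.aestronglyMeasurable)
    (hG.slice_right x).integrable (hG.integrable_fderiv_comp_inl μ x).aestronglyMeasurable
    (.of_forall fun z x _ => hC x z) (integrable_const C)
    (.of_forall fun z x _ => by simpa using hG.hasFDerivAt_comp_affine (.inl ℝ E F) (0, z) x)

theorem fderiv_average (hG : BddC1 G) (x e : E) :
    fderiv ℝ (fun x => ∫ z, G (x, z) ∂μ) x e = ∫ z, fderiv ℝ G (x, z) (e, 0) ∂μ := by
  rw [(hG.hasFDerivAt_average μ x).fderiv,
    ContinuousLinearMap.integral_apply (hG.integrable_fderiv_comp_inl μ x)]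
  simp

theorem average (hG : BddC1 G) : BddC1 fun x => ∫ z, G (x, z) ∂μ := by
  obtain ⟨C, hC⟩ := hG.bdd
  obtain ⟨C', hC'⟩ := hG.exists_bound_fderiv_comp_inl
  refine ⟨contDiff_one_iff_hasFDerivAt.2 ⟨_, ?_, hG.hasFDerivAt_average μ⟩,
    ⟨C * μ.real .univ, fun x => ?_⟩, C' * μ.real .univ, fun x => ?_⟩
  · exact continuous_of_dominated
      (fun x => (hG.integrable_fderiv_comp_inl μ x).aestronglyMeasurable)
      (fun x => .of_forall (hC' x)) (integrable_const C') (.of_forall fun z =>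
        (hG.continuous_fderiv.comp (.prodMk_left z)).clm_comp continuous_const)
  · exact norm_integral_le_of_norm_le_const (f := fun z => G (x, z)) (.of_forall fun z => hC (x, z))
  · rw [(hG.hasFDerivAt_average μ x).fderiv]
    exact norm_integral_le_of_norm_le_const (.of_forall (hC' x))

end BddC1

variable [SecondCountableTopology F] [MeasurableSpace F] [BorelSpace F]

theorem BddC1Pos.average (hG : BddC1Pos G) (μ : Measure F) [IsProbabilityMeasure μ] :
    BddC1Pos fun x => ∫ z, G (x, z) ∂μ where
  toBddC1 := hG.toBddC1.average μ
  exists_pos_le := by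
    obtain ⟨c, hc, hcG⟩ := hG.exists_pos_le
    refine ⟨c, hc, fun x => ?_⟩
    simpa using integral_mono (μ := μ) (integrable_const c) (hG.slice_right x).integrable
      fun z => hcG _

theorem BddC1Pos.integral_pos {f : F → ℝ} (hf : BddC1Pos f) (μ : Measure F)
    [IsProbabilityMeasure μ] : 0 < ∫ z, f z ∂μ :=
  ((hf.comp_clm (.snd ℝ ℝ F)).average μ).pos 0

end Average

/-! ### Logarithmic Sobolev inequalities -/

/-- The relative entropy `∫ f log f - (∫ f) log (∫ f)` of a positive, not necessarily normalized,
function with respect to a probability measure. -/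
def entropy {E : Type*} [MeasurableSpace E] (μ : Measure E) (f : E → ℝ) : ℝ :=
  ∫ x, f x * Real.log (f x) ∂μ - (∫ x, f x ∂μ) * Real.log (∫ x, f x ∂μ)

/-- The Fisher information `∫ (∂ₑ f)² / f dμ` of a positive function in the direction `e`. -/
def fisher {E : Type*} [NormedAddCommGroup E] [NormedSpace ℝ E] [MeasurableSpace E]
    (μ : Measure E) (f : E → ℝ) (e : E) : ℝ :=
  ∫ x, (fderiv ℝ f x e) ^ 2 / f x ∂μ

/-- `LogSob μ e` is the logarithmic Sobolev inequality for the probability measure `μ` and the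
directions `eᵢ`, whose lengths carry the constant of the inequality. -/
def LogSob {E ι : Type*} [NormedAddCommGroup E] [NormedSpace ℝ E] [MeasurableSpace E] [Fintype ι]
    (μ : Measure E) (e : ι → E) : Prop :=
  ∀ f : E → ℝ, BddC1Pos f → entropy μ f ≤ ∑ i, fisher μ f (e i)

/-- Cauchy–Schwarz, proved by integrating the tangent plane inequality of the jointly convex
function `(p, h) ↦ p² / h` at `(∫ p, ∫ h)`. -/
theorem sq_integral_div_integral_le {Ω : Type*} [MeasurableSpace Ω] {μ : Measure Ω} {p h : Ω → ℝ}
    (hp : Integrable p μ) (hh : Integrable h μ) (hph : Integrable (fun x => p x ^ 2 / h x) μ)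
    (hpos : ∀ x, 0 < h x) :
    (∫ x, p x ∂μ) ^ 2 / ∫ x, h x ∂μ ≤ ∫ x, p x ^ 2 / h x ∂μ := by
  set P := ∫ x, p x ∂μ with hP
  set R := ∫ x, h x ∂μ with hR
  rcases eq_or_ne R 0 with hR0 | hR0
  · rw [hR0, div_zero]
    exact integral_nonneg fun x => div_nonneg (sq_nonneg _) (hpos x).le
  have htangent (x : Ω) : 2 * P / R * p x - P ^ 2 / R ^ 2 * h x ≤ p x ^ 2 / h x := by
    have hx := hpos x
    have hgap : p x ^ 2 / h x - (2 * P / R * p x - P ^ 2 / R ^ 2 * h x)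
        = (p x - P / R * h x) ^ 2 / h x := by
      field_simp
      ring
    have : 0 ≤ (p x - P / R * h x) ^ 2 / h x := by positivity
    linarith
  calc P ^ 2 / R = ∫ x, (2 * P / R * p x - P ^ 2 / R ^ 2 * h x) ∂μ := by
        rw [integral_sub (hp.const_mul _) (hh.const_mul _), integral_const_mul,
          integral_const_mul, ← hP, ← hR]
        field_simp
        ring
    _ ≤ ∫ x, p x ^ 2 / h x ∂μ :=
        integral_mono ((hp.const_mul _).sub (hh.const_mul _)) hph htangent

section LogSob

variable {E F ι κ : Type*} [NormedAddCommGroup E] [NormedSpace ℝ E]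
  [NormedAddCommGroup F] [NormedSpace ℝ F] [Fintype ι] [Fintype κ]

theorem BddC1Pos.bddCont_sq_fderiv_div {f : E → ℝ} (hf : BddC1Pos f) (e : E) :
    BddCont fun x => (fderiv ℝ f x e) ^ 2 / f x := by
  simpa only [div_eq_mul_inv] using ((hf.bddCont_fderiv_apply e).pow 2).mul hf.inv.bddCont

variable [MeasurableSpace E] [MeasurableSpace F]

theorem fisher_nonneg {μ : Measure E} {f : E → ℝ} (hf : BddC1Pos f) (e : E) : 0 ≤ fisher μ f e :=
  integral_nonneg fun x => div_nonneg (sq_nonneg _) (hf.pos x).le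

theorem LogSob.dirac [MeasurableSingletonClass E] (x : E) (e : ι → E) :
    LogSob (Measure.dirac x) e := fun f hf => by
  simpa [entropy] using Finset.sum_nonneg fun i _ => fisher_nonneg hf (e i)

variable [BorelSpace E] [BorelSpace F]

theorem LogSob.map {μ : Measure E} {e : ι → E} (h : LogSob μ e) (A : E →L[ℝ] F) (b : F) :
    LogSob (μ.map fun x => A x + b) fun i => A (e i) := fun f hf => by
  have hm : AEMeasurable (fun x => A x + b) μ := by fun_prop
  have hfisher (i : ι) : fisher (μ.map fun x => A x + b) f (A (e i))
      = fisher μ (fun x => f (A x + b)) (e i) := by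
    simp only [fisher, (hf.hasFDerivAt_comp_affine A b _).fderiv, ContinuousLinearMap.comp_apply]
    exact integral_map hm (hf.bddCont_sq_fderiv_div _).continuous.aestronglyMeasurable
  simp only [entropy, hfisher, integral_map hm hf.mul_log.bddCont.continuous.aestronglyMeasurable,
    integral_map hm hf.bddCont.continuous.aestronglyMeasurable]
  exact h _ (hf.comp_affine A b)

variable [SecondCountableTopology E] [SecondCountableTopology F]

theorem LogSob.mono {μ : Measure E} [IsFiniteMeasure μ] {e : ι → E} {e' : κ → E} (h : LogSob μ e)
    (hle : ∀ l : E →L[ℝ] ℝ, ∑ i, (l (e i)) ^ 2 ≤ ∑ j, (l (e' j)) ^ 2) : LogSob μ e' :=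
  fun f hf => (h f hf).trans <| by
    simp only [fisher]
    rw [← integral_finsetSum _ fun i _ => (hf.bddCont_sq_fderiv_div (e i)).integrable,
      ← integral_finsetSum _ fun j _ => (hf.bddCont_sq_fderiv_div (e' j)).integrable]
    refine integral_mono (BddCont.sum _ fun i => hf.bddCont_sq_fderiv_div (e i)).integrable
      (BddCont.sum _ fun j => hf.bddCont_sq_fderiv_div (e' j)).integrable fun x => ?_
    simp only [← Finset.sum_div]
    exact div_le_div_of_nonneg_right (hle _) (hf.pos x).le

theorem fisher_prod {μ : Measure E} {ν : Measure F} [IsFiniteMeasure μ] [IsFiniteMeasure ν]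
    {f : E × F → ℝ} (hf : BddC1Pos f) (e : F) :
    fisher (μ.prod ν) f (0, e) = ∫ x, fisher ν (fun z => f (x, z)) e ∂μ := by
  simp only [fisher, hf.toBddC1.fderiv_slice_right]
  exact integral_prod _ (hf.bddCont_sq_fderiv_div _).integrable

theorem fisher_average_le {μ : Measure E} {ν : Measure F} [IsFiniteMeasure μ]
    [IsProbabilityMeasure ν] {f : E × F → ℝ} (hf : BddC1Pos f) (e : E) :
    fisher μ (fun x => ∫ z, f (x, z) ∂ν) e ≤ fisher (μ.prod ν) f (e, 0) := by
  have hint : Integrable (fun p => (fderiv ℝ f p (e, 0)) ^ 2 / f p) (μ.prod ν) :=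
    (hf.bddCont_sq_fderiv_div _).integrable
  rw [fisher, fisher, integral_prod _ hint]
  refine integral_mono ((hf.average ν).bddCont_sq_fderiv_div e).integrable
    hint.integral_prod_left fun x => ?_
  simp only [hf.toBddC1.fderiv_average ν]
  exact sq_integral_div_integral_le ((hf.bddCont_fderiv_apply _).comp (.prodMk_right x)).integrable
    (hf.slice_right x).integrable ((hf.bddCont_sq_fderiv_div _).comp (.prodMk_right x)).integrable
    fun z => hf.pos _

theorem entropy_prod {μ : Measure E} {ν : Measure F} [IsFiniteMeasure μ]
    [IsProbabilityMeasure ν] {f : E × F → ℝ} (hf : BddC1Pos f) :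
    entropy (μ.prod ν) f = entropy μ (fun x => ∫ z, f (x, z) ∂ν)
      + ∫ x, entropy ν (fun z => f (x, z)) ∂μ := by
  simp only [entropy]
  rw [integral_sub (hf.mul_log.average ν).integrable (hf.average ν).mul_log.integrable,
    integral_prod _ hf.mul_log.integrable, integral_prod _ hf.integrable]
  ring

theorem LogSob.prod {μ : Measure E} {ν : Measure F} [IsProbabilityMeasure μ]
    [IsProbabilityMeasure ν] {e : ι → E} {e' : κ → F} (hμ : LogSob μ e) (hν : LogSob ν e') :
    LogSob (μ.prod ν) (Sum.elim (fun i => (e i, 0)) fun j => (0, e' j)) := fun f hf => by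
  have hfst : entropy μ (fun x => ∫ z, f (x, z) ∂ν) ≤ ∑ i, fisher (μ.prod ν) f (e i, 0) :=
    (hμ _ (hf.average ν)).trans (Finset.sum_le_sum fun i _ => fisher_average_le hf (e i))
  have hint (j : κ) : Integrable (fun x => fisher ν (fun z => f (x, z)) (e' j)) μ := by
    simpa only [fisher, hf.toBddC1.fderiv_slice_right] using
      (hf.bddCont_sq_fderiv_div (0, e' j)).integrable.integral_prod_left
  have hsnd : ∫ x, entropy ν (fun z => f (x, z)) ∂μ ≤ ∑ j, fisher (μ.prod ν) f (0, e' j) := by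
    simp only [fisher_prod hf]
    rw [← integral_finsetSum _ fun j _ => hint j]
    exact integral_mono ((hf.mul_log.average ν).sub (hf.average ν).mul_log).integrable
      (integrable_finsetSum _ fun j _ => hint j) fun x => hν _ (hf.slice_right x)
  rw [entropy_prod hf, Fintype.sum_sum_type]
  exact add_le_add hfst hsnd

end LogSob

/-- The entropy is dominated by the `χ²`-divergence `∫ (f - m)² / m` with `m = ∫ f`. -/
theorem entropy_le_sq_div_integral {E : Type*} [MeasurableSpace E] {μ : Measure E}
    [IsProbabilityMeasure μ] {f : E → ℝ} {J : ℝ} (hpos : ∀ x, 0 < f x) (hf : Integrable f μ)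
    (hflog : Integrable (fun x => f x * Real.log (f x)) μ)
    (hJ : ∀ᵐ x ∂μ, |f x - ∫ y, f y ∂μ| ≤ J) : entropy μ f ≤ J ^ 2 / ∫ x, f x ∂μ := by
  set m := ∫ x, f x ∂μ with hm
  have hm0 : 0 < m := by
    have hsupp : Function.support f = Set.univ := Set.eq_univ_of_forall fun x => (hpos x).ne'
    rw [hm, integral_pos_iff_support_of_nonneg (fun x => (hpos x).le) hf, hsupp]
    simp
  have hdev : Integrable (fun x => f x - m) μ := hf.sub (integrable_const m)
  have hpt (x : E) (hx : |f x - m| ≤ J) :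
      f x * Real.log (f x) - f x * Real.log m ≤ J ^ 2 / m + (f x - m) :=
    calc f x * Real.log (f x) - f x * Real.log m = f x * Real.log (f x / m) := by
          rw [Real.log_div (hpos x).ne' hm0.ne']
          ring
      _ ≤ f x * (f x / m - 1) := mul_le_mul_of_nonneg_left
          (Real.log_le_sub_one_of_pos (div_pos (hpos x) hm0)) (hpos x).le
      _ = (f x - m) ^ 2 / m + (f x - m) := by
          field_simp
          ring
      _ ≤ J ^ 2 / m + (f x - m) := by
          have := sq_le_sq' (abs_le.1 hx).1 (abs_le.1 hx).2
          gcongr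
  calc entropy μ f = ∫ x, (f x * Real.log (f x) - f x * Real.log m) ∂μ := by
        rw [integral_sub hflog (hf.mul_const _), integral_mul_const, entropy]
    _ ≤ ∫ x, (J ^ 2 / m + (f x - m)) ∂μ :=
        integral_mono_ae (hflog.sub (hf.mul_const _)) ((integrable_const _).add hdev)
          (hJ.mono hpt)
    _ = J ^ 2 / m := by
        rw [integral_add (integrable_const _) hdev, integral_sub hf (integrable_const _), ← hm]
        simp

/-- The uniform probability measure on `[0, 1]`. -/
abbrev unitUniform : Measure ℝ := volume.restrict (Set.Icc 0 1)

instance : IsProbabilityMeasure unitUniform := ⟨by simp⟩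

theorem abs_sub_le_setIntegral_abs_deriv {f : ℝ → ℝ} (hf : ContDiff ℝ 1 f) {a b x y : ℝ}
    (hx : x ∈ Set.Icc a b) (hy : y ∈ Set.Icc a b) :
    |f x - f y| ≤ ∫ s in Set.Icc a b, |deriv f s| := by
  have hcont : Continuous (deriv f) := hf.continuous_deriv le_rfl
  rw [← intervalIntegral.integral_deriv_eq_sub
    (fun z _ => (hf.differentiable one_ne_zero) z) (hcont.intervalIntegrable _ _)]
  refine (intervalIntegral.norm_integral_le_integral_norm_uIoc (f := deriv f)
    (μ := volume)).trans ?_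
  exact setIntegral_mono_set hcont.abs.integrableOn_Icc (.of_forall fun z => abs_nonneg _)
    (Set.uIoc_subset_uIcc.trans (Set.uIcc_subset_Icc hy hx)).eventuallyLE

theorem abs_sub_integral_unitUniform_le {f : ℝ → ℝ} (hf : ContDiff ℝ 1 f) {x : ℝ}
    (hx : x ∈ Set.Icc 0 1) : |f x - ∫ y, f y ∂unitUniform| ≤ ∫ s, |deriv f s| ∂unitUniform := by
  have hmean : f x - ∫ y, f y ∂unitUniform = ∫ y, (f x - f y) ∂unitUniform := by
    rw [integral_sub (integrable_const _) hf.continuous.integrableOn_Icc]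
    simp
  rw [hmean]
  simpa using norm_integral_le_of_norm_le_const (μ := unitUniform) (f := fun y => f x - f y)
    ((ae_restrict_iff' measurableSet_Icc).2
      (.of_forall fun y hy => abs_sub_le_setIntegral_abs_deriv hf hx hy))

theorem logSob_unitUniform : LogSob unitUniform fun _ : Unit => (1 : ℝ) := fun f hf => by
  have hJ : ∀ᵐ x ∂unitUniform, |f x - ∫ y, f y ∂unitUniform| ≤ ∫ s, |deriv f s| ∂unitUniform :=
    (ae_restrict_iff' measurableSet_Icc).2
      (.of_forall fun x hx => abs_sub_integral_unitUniform_le hf.contDiff hx)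
  have hderiv : BddCont (deriv f) := by
    simpa only [fderiv_apply_one_eq_deriv] using hf.bddCont_fderiv_apply 1
  have hfisher := (hf.bddCont_sq_fderiv_div 1).integrable (μ := unitUniform)
  simp only [fderiv_apply_one_eq_deriv] at hfisher
  calc entropy unitUniform f
      ≤ (∫ s, |deriv f s| ∂unitUniform) ^ 2 / ∫ x, f x ∂unitUniform :=
        entropy_le_sq_div_integral hf.pos hf.integrable hf.mul_log.integrable hJ
    _ ≤ ∫ x, |deriv f x| ^ 2 / f x ∂unitUniform :=
        sq_integral_div_integral_le hderiv.integrable.abs hf.integrable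
          (by simpa only [sq_abs] using hfisher) hf.pos
    _ = ∑ _ : Unit, fisher unitUniform f 1 := by
        simp [fisher]

section Limits

variable {E ι : Type*} [NormedAddCommGroup E] [NormedSpace ℝ E] [SecondCountableTopology E]
  [MeasurableSpace E] [BorelSpace E] [Fintype ι]

theorem LogSob.of_tendsto {α : Type*} {l : Filter α} [l.NeBot] {μs : α → ProbabilityMeasure E}
    {μ : ProbabilityMeasure E} {e : ι → E} (h : ∀ᶠ n in l, LogSob (μs n : Measure E) e)
    (ht : Tendsto μs l (nhds μ)) : LogSob (μ : Measure E) e := fun f hf => by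
  have hlim {g : E → ℝ} (hg : BddCont g) :
      Tendsto (fun n => ∫ x, g x ∂(μs n : Measure E)) l (nhds (∫ x, g x ∂(μ : Measure E))) := by
    obtain ⟨C, hC⟩ := hg.bdd
    exact ProbabilityMeasure.tendsto_iff_forall_integral_tendsto.1 ht
      (.ofNormedAddCommGroup g hg.continuous C hC)
  have hmean : ∫ x, f x ∂(μ : Measure E) ≠ 0 := (hf.integral_pos _).ne'
  refine le_of_tendsto_of_tendsto
    ((hlim hf.mul_log.bddCont).sub ((hlim hf.bddCont).mul ((hlim hf.bddCont).log hmean)))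
    (tendsto_finsetSum _ fun i _ => hlim (hf.bddCont_sq_fderiv_div (e i))) ?_
  filter_upwards [h] with n hn
  exact hn f hf

theorem LogSob.pi {ν : Measure E} [IsProbabilityMeasure ν] {e : ι → E} (h : LogSob ν e) (d : ℕ) :
    LogSob (Measure.pi fun _ : Fin d => ν)
      fun p : Fin d × ι => (Pi.single p.1 (e p.2) : Fin d → E) := by
  induction d with
  | zero =>
    rw [Measure.pi_of_empty]
    exact .dirac _ _
  | succ d ih =>
    let A : E × (Fin d → E) →L[ℝ] (Fin (d + 1) → E) := .pi (Fin.cons (.fst ℝ E (Fin d → E))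
      fun i => (ContinuousLinearMap.proj i).comp (.snd ℝ E (Fin d → E)))
    have hA (x : E × (Fin d → E)) : A x = Fin.cons x.1 x.2 := by
      ext i
      cases i using Fin.cases <;> simp [A]
    have hfst (y : E) : A (y, 0) = Pi.single 0 y := by
      ext i
      cases i using Fin.cases <;> simp [hA]
    have hsnd (i : Fin d) (y : E) : A (0, Pi.single i y) = Pi.single i.succ y := by
      ext j
      cases j using Fin.cases <;> simp [hA, Pi.single_apply]
    have hmap : (ν.prod (Measure.pi fun _ : Fin d => ν)).map (fun x => A x + 0)
        = Measure.pi fun _ : Fin (d + 1) => ν := by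
      rw [← (measurePreserving_piFinSuccAbove (fun _ : Fin (d + 1) => ν) 0).symm.map_eq]
      congr 1
      ext x
      simp [hA, MeasurableEquiv.piFinSuccAbove_symm_apply, Fin.insertNthEquiv]
    refine (hmap ▸ (h.prod ih).map A 0).mono fun l => le_of_eq ?_
    simp [Fintype.sum_sum_type, Fintype.sum_prod_type, Fin.sum_univ_succ, hfst, hsnd]

end Limits

section Gaussian

open ProbabilityTheory

theorem LogSob.map_inv_sqrt_mul_sum {Ω : Type*} [MeasurableSpace Ω] {P : Measure Ω}
    {X : ℕ → Ω → ℝ} {ν : Measure ℝ} [IsProbabilityMeasure ν] {a : ℝ}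
    (h : LogSob ν fun _ : Unit => a) (hX : ∀ k, HasLaw (X k) ν P) (hindep : iIndepFun X P)
    {n : ℕ} (hn : n ≠ 0) :
    LogSob (P.map fun ω => (√n)⁻¹ * ∑ k ∈ Finset.range n, X k ω) fun _ : Unit => a := by
  have := hindep.isProbabilityMeasure
  have hlaw : P.map (fun ω (i : Fin n) => X i ω) = Measure.pi fun _ => ν := by
    simpa only [(hX _).map_eq] using (iIndepFun_iff_map_fun_eq_pi_map
      fun i : Fin n => (hX i).aemeasurable).1 (hindep.precomp Fin.val_injective)
  let A : (Fin n → ℝ) →L[ℝ] ℝ := (√n)⁻¹ • ∑ i, ContinuousLinearMap.proj i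
  have hA (x : Fin n → ℝ) : A x = (√n)⁻¹ * ∑ i, x i := by simp [A]
  have hmap : (Measure.pi fun _ : Fin n => ν).map (fun x => A x + 0)
      = P.map fun ω => (√n)⁻¹ * ∑ k ∈ Finset.range n, X k ω := by
    rw [← hlaw, AEMeasurable.map_map_of_aemeasurable (f := fun ω (i : Fin n) => X i ω) (by fun_prop)
      (aemeasurable_pi_lambda _ fun i => (hX i).aemeasurable)]
    congr 1
    ext ω
    simp [hA, Finset.sum_range]
  have : IsProbabilityMeasure (P.map fun ω => (√n)⁻¹ * ∑ k ∈ Finset.range n, X k ω) := by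
    rw [← hmap]
    exact Measure.isProbabilityMeasure_map (by fun_prop)
  refine (hmap ▸ (h.pi n).map A 0).mono fun l => le_of_eq ?_
  have hn' : (0 : ℝ) < n := by positivity
  have hl (i : Fin n) : l (A (Pi.single i a)) ^ 2 = l a ^ 2 / n := by
    have : A (Pi.single i a) = (√n)⁻¹ • a := by simp [hA]
    rw [this, map_smul, smul_eq_mul, mul_pow, inv_pow, Real.sq_sqrt hn'.le]
    ring
  simp [hl, mul_div_cancel₀ _ hn'.ne']

/-- By the central limit theorem. -/
theorem LogSob.gaussianReal_of_standardized {ν : Measure ℝ} [IsProbabilityMeasure ν] {a : ℝ}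
    (h : LogSob ν fun _ : Unit => a) (hmean : ∫ x, x ∂ν = 0) (hvar : ∫ x, x ^ 2 ∂ν = 1) :
    LogSob (gaussianReal 0 1) fun _ : Unit => a := by
  obtain ⟨Ω, _, P, X, hXm, hXlaw, hXindep, hP⟩ := exists_iid ℕ ν
  have hident (i : ℕ) : IdentDistrib (X i) (X 0) P P :=
    ⟨(hXm i).aemeasurable, (hXm 0).aemeasurable, by rw [(hXlaw i).map_eq, (hXlaw 0).map_eq]⟩
  have hmean' : ∫ ω, X 0 ω ∂P = 0 := by rw [(hXlaw 0).integral_eq, hmean]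
  have hvar' : ∫ ω, (X 0 ^ 2) ω ∂P = 1 := by
    rw [← hvar, ← (hXlaw 0).integral_comp (f := fun x => x ^ 2) (by fun_prop)]
    rfl
  have hclt := tendstoInDistribution_inv_sqrt_mul_sum (Y := id) (P' := gaussianReal 0 1)
    .id hmean' hvar' hXindep hident
  have hsum := (eventually_ne_atTop 0).mono fun n hn => h.map_inv_sqrt_mul_sum hXlaw hXindep hn
  simpa using LogSob.of_tendsto hsum hclt.tendsto

theorem integral_unitUniform (f : ℝ → ℝ) : ∫ x, f x ∂unitUniform = ∫ x in (0 : ℝ)..1, f x := by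
  rw [integral_Icc_eq_integral_Ioc, intervalIntegral.integral_of_le zero_le_one]

/-- The constant is the inverse of the variance of the uniform law on `[0, 1]`. -/
theorem logSob_gaussianReal : LogSob (gaussianReal 0 1) fun _ : Unit => √12 := by
  let A : ℝ →L[ℝ] ℝ := √12 • .id ℝ ℝ
  have hA (x : ℝ) : A x + -(√12 / 2) = √12 * (x - 1 / 2) := by
    simp only [A, smul_apply, ContinuousLinearMap.id_apply, smul_eq_mul]
    ring
  have hm : AEMeasurable (fun x => A x + -(√12 / 2)) unitUniform := by fun_prop
  have := Measure.isProbabilityMeasure_map hm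
  have hls : LogSob (unitUniform.map fun x => A x + -(√12 / 2)) fun _ : Unit => √12 := by
    simpa [A] using logSob_unitUniform.map A (-(√12 / 2))
  refine hls.gaussianReal_of_standardized ?_ ?_
  · rw [integral_map hm (by fun_prop), integral_unitUniform]
    simp only [hA, intervalIntegral.integral_const_mul]
    norm_num
  · rw [integral_map hm (by fun_prop), integral_unitUniform]
    simp only [hA, mul_pow, intervalIntegral.integral_const_mul]
    rw [intervalIntegral.integral_comp_sub_right (fun x => x ^ 2), integral_pow]
    norm_num

end Gaussian

/-! ### The reference measure on phase space -/

/-- Normalized Lebesgue measure on the torus, carried by the fundamental cube. -/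
abbrev cubeMeas (d : ℕ) : Measure (Fin d → ℝ) := Measure.pi fun _ => unitUniform

/-- The standard Gaussian measure on `ℝ^d`. -/
abbrev gaussMeas (d : ℕ) : Measure (Fin d → ℝ) :=
  Measure.pi fun _ => ProbabilityTheory.gaussianReal 0 1

/-- The probability measure `μ = ℳ(v) dv dx` on phase space. -/
abbrev phaseMeas (d : ℕ) : Measure ((Fin d → ℝ) × (Fin d → ℝ)) :=
  (cubeMeas d).prod (gaussMeas d)

theorem cubeMeas_eq_restrict_cube (d : ℕ) : cubeMeas d = volume.restrict (cube d) := by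
  rw [cubeMeas, cube, ← Set.pi_univ_Icc, volume_pi, Measure.restrict_pi_pi]
  rfl

theorem gauss_eq_prod (d : ℕ) (v : Fin d → ℝ) :
    gauss d v = ∏ i, ProbabilityTheory.gaussianPDFReal 0 1 (v i) := by
  have hconst : (√(2 * π))⁻¹ ^ d = (2 * π) ^ (-(d : ℝ) / 2) := by
    rw [Real.sqrt_eq_rpow, ← Real.rpow_neg (by positivity), ← Real.rpow_natCast,
      ← Real.rpow_mul (by positivity)]
    ring_nf
  rw [gauss, ← hconst]
  simp [ProbabilityTheory.gaussianPDFReal, Finset.prod_mul_distrib, ← Real.exp_sum,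
    Finset.sum_div, neg_div]

theorem gauss_nonneg (d : ℕ) (v : Fin d → ℝ) : 0 ≤ gauss d v := by
  unfold gauss; positivity

theorem continuous_gauss (d : ℕ) : Continuous (gauss d) := by
  unfold gauss; fun_prop

theorem integrable_gauss (d : ℕ) : Integrable (gauss d) := by
  rw [funext (gauss_eq_prod d)]
  exact Integrable.fintype_prod fun _ => ProbabilityTheory.integrable_gaussianPDFReal 0 1

theorem gaussMeas_eq_withDensity (d : ℕ) :
    gaussMeas d = volume.withDensity fun v => ENNReal.ofReal (gauss d v) := by
  refine Measure.pi_eq fun s hs => ?_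
  rw [withDensity_apply _ (MeasurableSet.univ_pi hs), ← ofReal_integral_eq_lintegral_ofReal
    (integrable_gauss d).restrict (.of_forall (gauss_nonneg d)), volume_pi,
    Measure.restrict_pi_pi]
  simp_rw [gauss_eq_prod]
  rw [integral_fintype_prod_eq_prod (fun _ => ProbabilityTheory.gaussianPDFReal 0 1),
    ENNReal.ofReal_prod_of_nonneg
      fun i _ => integral_nonneg (ProbabilityTheory.gaussianPDFReal_nonneg 0 1)]
  simp_rw [ProbabilityTheory.gaussianReal_apply_eq_integral 0 one_ne_zero]

theorem integral_gaussMeas {d : ℕ} (f : (Fin d → ℝ) → ℝ) :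
    ∫ v, f v ∂gaussMeas d = ∫ v, f v * gauss d v := by
  rw [gaussMeas_eq_withDensity, integral_withDensity_eq_integral_toReal_smul
    (continuous_gauss d).measurable.ennreal_ofReal (by simp)]
  simp [ENNReal.toReal_ofReal (gauss_nonneg d _), mul_comm]

theorem integrable_gaussMeas_iff {d : ℕ} {f : (Fin d → ℝ) → ℝ} :
    Integrable f (gaussMeas d) ↔ Integrable fun v => f v * gauss d v := by
  rw [gaussMeas_eq_withDensity, integrable_withDensity_iff_integrable_smul'
    (continuous_gauss d).measurable.ennreal_ofReal (by simp)]
  simp [ENNReal.toReal_ofReal (gauss_nonneg d _), mul_comm]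

theorem proj_eq_integral {d : ℕ} (f : (Fin d → ℝ) → (Fin d → ℝ) → ℝ) (x : Fin d → ℝ) :
    proj d f x = ∫ u, f x u ∂gaussMeas d := (integral_gaussMeas _).symm

theorem intMu_eq_integral {d : ℕ} {F : (Fin d → ℝ) × (Fin d → ℝ) → ℝ} (hF : BddCont F) :
    intMu d (fun x v => F (x, v)) = ∫ z, F z ∂phaseMeas d := by
  rw [integral_prod _ hF.integrable, intMu, cubeMeas_eq_restrict_cube]
  simp_rw [integral_gaussMeas]

theorem logSob_cubeMeas (d : ℕ) :
    LogSob (cubeMeas d) fun i => (Pi.single i 1 : Fin d → ℝ) :=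
  (logSob_unitUniform.pi d).mono fun l => by simp [Fintype.sum_prod_type]

theorem logSob_gaussMeas (d : ℕ) :
    LogSob (gaussMeas d) fun i => (Pi.single i √12 : Fin d → ℝ) :=
  (logSob_gaussianReal.pi d).mono fun l => by simp [Fintype.sum_prod_type]

theorem logSob_phaseMeas (d : ℕ) : LogSob (phaseMeas d)
    (Sum.elim (fun i => (Pi.single i 1, 0)) fun i => (0, Pi.single i √12) :
      Fin d ⊕ Fin d → (Fin d → ℝ) × (Fin d → ℝ)) :=
  (logSob_cubeMeas d).prod (logSob_gaussMeas d)

section Velocity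

variable {d : ℕ}

theorem integrable_coord_mul (i : Fin d) {f : (Fin d → ℝ) → ℝ} (hf : BddCont f) :
    Integrable (fun v => v i * f v) (gaussMeas d) := by
  obtain ⟨C, hC⟩ := hf.bdd
  have hcoord : Integrable (fun v => v i) (gaussMeas d) := integrable_eval
    (μ := fun _ : Fin d => ProbabilityTheory.gaussianReal 0 1)
    ((ProbabilityTheory.memLp_id_gaussianReal 1).integrable (by norm_num))
  exact hcoord.mul_bdd hf.continuous.aestronglyMeasurable (.of_forall hC)

theorem integrable_snd_coord_mul (i : Fin d) {f : (Fin d → ℝ) × (Fin d → ℝ) → ℝ}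
    (hf : BddCont f) : Integrable (fun z => z.2 i * f z) (phaseMeas d) := by
  obtain ⟨C, hC⟩ := hf.bdd
  have hcoord : Integrable (fun v => v i) (gaussMeas d) := by
    simpa using integrable_coord_mul i (.const 1)
  exact (hcoord.comp_snd _).mul_bdd hf.continuous.aestronglyMeasurable (.of_forall hC)

theorem differentiable_gauss (d : ℕ) : Differentiable ℝ (gauss d) := by
  unfold gauss; fun_prop

theorem fderiv_gauss_single (v : Fin d → ℝ) (i : Fin d) :
    fderiv ℝ (gauss d) v (Pi.single i 1) = -(v i * gauss d v) := by
  have hexponent : HasFDerivAt (fun v : Fin d → ℝ => ∑ j, -v j ^ 2 / 2)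
      (∑ j, -v j • ContinuousLinearMap.proj (R := ℝ) (φ := fun _ : Fin d => ℝ) j) v := by
    refine HasFDerivAt.fun_sum fun j _ => ?_
    have hj : HasDerivAt (fun t : ℝ => -t ^ 2 / 2) (-v j) (v j) := by
      simpa [neg_div] using ((hasDerivAt_id (v j)).pow 2).neg.div_const 2
    exact hj.comp_hasFDerivAt v (hasFDerivAt_apply (𝕜 := ℝ) (F' := fun _ => ℝ) j v)
  have heq : gauss d = fun v => (2 * π) ^ (-(d : ℝ) / 2) * Real.exp (∑ j, -v j ^ 2 / 2) := by
    ext v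
    rw [gauss, ← Finset.sum_div, Finset.sum_neg_distrib]
  rw [heq, (hexponent.exp.const_mul _).fderiv]
  simp only [smul_apply, sum_apply, ContinuousLinearMap.proj_apply, Pi.single_apply, smul_eq_mul,
    mul_ite, mul_one, mul_zero, Finset.sum_ite_eq', Finset.mem_univ, ↓reduceIte, mul_neg, neg_inj]
  ring

/-- Gaussian integration by parts. -/
theorem integral_coord_mul_gaussMeas {f : (Fin d → ℝ) → ℝ} (hf : BddC1 f) (i : Fin d) :
    ∫ v, v i * f v ∂gaussMeas d = ∫ v, fderiv ℝ f v (Pi.single i 1) ∂gaussMeas d := by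
  have hfderiv : (fun v => f v * fderiv ℝ (gauss d) v (Pi.single i 1))
      = fun v => -(v i * f v * gauss d v) := by
    ext v
    rw [fderiv_gauss_single]
    ring
  have hparts := integral_mul_fderiv_eq_neg_fderiv_mul_of_integrable (μ := volume) (f := f)
    (g := gauss d) (v := Pi.single i 1)
    (integrable_gaussMeas_iff.1 (hf.bddCont_fderiv_apply _).integrable)
    (hfderiv ▸ (integrable_gaussMeas_iff.1 (integrable_coord_mul i hf.bddCont)).neg)
    (integrable_gaussMeas_iff.1 hf.integrable) (fun v _ => hf.differentiable v)
    (fun v _ => differentiable_gauss d v)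
  rw [hfderiv, integral_neg, neg_inj] at hparts
  rw [integral_gaussMeas, integral_gaussMeas, hparts]

theorem integral_fderiv_line_eq_zero {E : Type*} [NormedAddCommGroup E] [NormedSpace ℝ E]
    {g : E → ℝ} (hg : BddC1 g) {e : E} (hper : Function.Periodic g e) (p : E) :
    ∫ t : ℝ, fderiv ℝ g (t • e + p) e ∂unitUniform = 0 := by
  have hderiv (t : ℝ) : HasDerivAt (fun t : ℝ => g (t • e + p)) (fderiv ℝ g (t • e + p) e) t := by
    simpa using (hg.hasFDerivAt_comp_affine (.toSpanSingleton ℝ e) p t).hasDerivAt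
  have hcont : Continuous fun t : ℝ => fderiv ℝ g (t • e + p) e :=
    (hg.bddCont_fderiv_apply e).continuous.comp (by fun_prop)
  rw [integral_unitUniform, intervalIntegral.integral_eq_sub_of_hasDerivAt
    (fun t _ => hderiv t) (hcont.intervalIntegrable _ _)]
  simp [add_comm e, hper p]

theorem integral_fderiv_cubeMeas {g : (Fin d → ℝ) → ℝ} (hg : BddC1 g) {i : Fin d}
    (hper : Function.Periodic g (Pi.single i 1)) :
    ∫ x, fderiv ℝ g x (Pi.single i 1) ∂cubeMeas d = 0 := by
  obtain _ | n := d
  · exact i.elim0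
  have hmp := (measurePreserving_piFinSuccAbove (fun _ : Fin (n + 1) => unitUniform) i).symm
  have hint : Integrable (fun x => fderiv ℝ g x (Pi.single i 1)) (cubeMeas (n + 1)) :=
    (hg.bddCont_fderiv_apply _).integrable
  have hline (t : ℝ) (y : Fin n → ℝ) :
      (MeasurableEquiv.piFinSuccAbove (fun _ => ℝ) i).symm (t, y)
        = t • Pi.single i (1 : ℝ) + i.insertNth 0 y := by
    ext k
    cases k using Fin.succAboveCases i <;>
      simp [MeasurableEquiv.piFinSuccAbove_symm_apply, Fin.insertNthEquiv]
  rw [← hmp.integral_comp']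
  refine (integral_prod_symm _ (hmp.integrable_comp_of_integrable hint)).trans ?_
  simp only [Function.comp_apply, hline, integral_fderiv_line_eq_zero hg hper, integral_zero]

theorem clm_apply_eq_sum (l : (Fin d → ℝ) →L[ℝ] ℝ) (v : Fin d → ℝ) :
    l v = ∑ i, v i * l (Pi.single i 1) := by
  conv_lhs => rw [pi_eq_sum_univ' v]
  simp

theorem clm_inl_eq_sum {F : Type*} [NormedAddCommGroup F] [NormedSpace ℝ F]
    (l : (Fin d → ℝ) × F →L[ℝ] ℝ) (v : Fin d → ℝ) :
    l (v, 0) = ∑ i, v i * l (Pi.single i 1, 0) :=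
  clm_apply_eq_sum (l.comp (.inl ℝ (Fin d → ℝ) F)) v

section Transport

variable {G : (Fin d → ℝ) × (Fin d → ℝ) → ℝ}

theorem integrable_fderiv_transport_phaseMeas (hG : BddC1 G) :
    Integrable (fun z => fderiv ℝ G z (z.2, 0)) (phaseMeas d) := by
  simp_rw [fun z : (Fin d → ℝ) × (Fin d → ℝ) => clm_inl_eq_sum (fderiv ℝ G z) z.2]
  exact integrable_finsetSum _ fun i _ => integrable_snd_coord_mul i (hG.bddCont_fderiv_apply _)

/-- The transport operator `v · ∇ₓ` is antisymmetric for `μ`. -/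
theorem integral_fderiv_transport_phaseMeas (hG : BddC1 G)
    (hper : ∀ i, Function.Periodic G (Pi.single i 1, 0)) :
    ∫ z, fderiv ℝ G z (z.2, 0) ∂phaseMeas d = 0 := by
  have hint i := integrable_snd_coord_mul i (hG.bddCont_fderiv_apply (Pi.single i 1, 0))
  simp_rw [fun z : (Fin d → ℝ) × (Fin d → ℝ) => clm_inl_eq_sum (fderiv ℝ G z) z.2]
  rw [integral_finsetSum _ fun i _ => hint i]
  refine Finset.sum_eq_zero fun i _ => ?_
  rw [integral_prod_symm _ (hint i)]
  refine integral_eq_zero_of_ae (.of_forall fun v => ?_)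
  have hslice : Function.Periodic (fun x => G (x, v)) (Pi.single i 1) := fun x => by
    simpa using hper i (x, v)
  simp only [integral_const_mul, Pi.zero_apply, ← hG.fderiv_slice_left]
  rw [integral_fderiv_cubeMeas (hG.slice_left v) hslice, mul_zero]

end Transport

end Velocity

/-! ### Entropies and Fisher information on phase space -/

section Functionals

theorem entropy_nonneg {E : Type*} [NormedAddCommGroup E] [NormedSpace ℝ E] [MeasurableSpace E]
    [BorelSpace E] [SecondCountableTopology E] {μ : Measure E} [IsProbabilityMeasure μ] {f : E → ℝ}
    (hf : BddC1Pos f) : 0 ≤ entropy μ f :=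
  sub_nonneg.2 <| Real.convexOn_mul_log.map_integral_le Real.continuous_mul_log.continuousOn
    isClosed_Ici (.of_forall fun x => (hf.pos x).le) hf.integrable hf.mul_log.integrable

variable {d : ℕ} {f : (Fin d → ℝ) → (Fin d → ℝ) → ℝ}

theorem bddC1Pos_proj (hf : BddC1Pos (Function.uncurry f)) : BddC1Pos (proj d f) := by
  rw [funext (proj_eq_integral f)]
  exact hf.average (gaussMeas d)

theorem Ifull_eq_sum_fisher (hf : BddC1Pos (Function.uncurry f)) :
    Ifull d f = ∑ i, fisher (phaseMeas d) (Function.uncurry f) (Pi.single i 1, 0)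
      + ∑ i, fisher (phaseMeas d) (Function.uncurry f) (0, Pi.single i 1) := by
  have hX (i : Fin d) := hf.bddCont_sq_fderiv_div (Pi.single i 1, 0)
  have hV (i : Fin d) := hf.bddCont_sq_fderiv_div (0, Pi.single i 1)
  have hgradx x v i : gradx d f x v i = fderiv ℝ (Function.uncurry f) (x, v) (Pi.single i 1, 0) :=
    hf.fderiv_slice_left x _ v
  have hgradv x v i : gradv d f x v i = fderiv ℝ (Function.uncurry f) (x, v) (0, Pi.single i 1) :=
    hf.fderiv_slice_right x v _
  simp only [Ifull, nsq, hgradx, hgradv, add_div, Finset.sum_div]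
  refine (intMu_eq_integral ((BddCont.sum .univ hX).add (BddCont.sum .univ hV))).trans ?_
  rw [integral_add (BddCont.sum .univ hX).integrable (BddCont.sum .univ hV).integrable,
    integral_finsetSum _ fun i _ => (hX i).integrable,
    integral_finsetSum _ fun i _ => (hV i).integrable]
  rfl

theorem Hent_eq_entropy (hf : BddC1Pos (Function.uncurry f)) (hmass : intMu d f = 1) :
    Hent d f = entropy (phaseMeas d) (Function.uncurry f) := by
  have hint := intMu_eq_integral hf.bddCont
  have hent := intMu_eq_integral hf.mul_log.bddCont
  simp only [Function.uncurry_apply_pair] at hint hent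
  rw [entropy, ← hint, hmass, Real.log_one, mul_zero, sub_zero, ← hent, Hent]

theorem HPi_eq_entropy (hmass : intMu d f = 1) : HPi d f = entropy (cubeMeas d) (proj d f) := by
  have hint : ∫ x, proj d f x ∂cubeMeas d = 1 := by
    rw [← hmass, cubeMeas_eq_restrict_cube]
    rfl
  rw [entropy, hint, Real.log_one, mul_zero, sub_zero, cubeMeas_eq_restrict_cube, HPi]

theorem HPi_nonneg (hf : BddC1Pos (Function.uncurry f)) (hmass : intMu d f = 1) :
    0 ≤ HPi d f := by
  rw [HPi_eq_entropy hmass]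
  exact entropy_nonneg (bddC1Pos_proj hf)

theorem HPi_le_sum_fisher (hf : BddC1Pos (Function.uncurry f)) (hmass : intMu d f = 1) :
    HPi d f ≤ ∑ i, fisher (phaseMeas d) (Function.uncurry f) (Pi.single i 1, 0) := by
  rw [HPi_eq_entropy hmass]
  refine (logSob_cubeMeas d _ (bddC1Pos_proj hf)).trans (Finset.sum_le_sum fun i _ => ?_)
  rw [funext (proj_eq_integral f)]
  exact fisher_average_le hf _

theorem fisher_smul {E : Type*} [NormedAddCommGroup E] [NormedSpace ℝ E] [MeasurableSpace E]
    (μ : Measure E) (f : E → ℝ) (c : ℝ) (e : E) : fisher μ f (c • e) = c ^ 2 * fisher μ f e := by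
  simp only [fisher, map_smul, smul_eq_mul, mul_pow, mul_div_assoc, integral_const_mul]

theorem Hent_le_Ifull (hf : BddC1Pos (Function.uncurry f)) (hmass : intMu d f = 1) :
    Hent d f ≤ 12 * Ifull d f := by
  have hdir (i : Fin d) :
      ((0, Pi.single i √12) : (Fin d → ℝ) × (Fin d → ℝ)) = √12 • (0, Pi.single i 1) := by
    simp [Prod.smul_mk, ← Pi.single_smul']
  have hlogSob := logSob_phaseMeas d _ hf
  simp only [Fintype.sum_sum_type, Sum.elim_inl, Sum.elim_inr, hdir, fisher_smul,
    Real.sq_sqrt (show (0 : ℝ) ≤ 12 by norm_num), ← Finset.mul_sum] at hlogSob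
  have hX := Finset.sum_nonneg fun (i : Fin d) (_ : i ∈ Finset.univ) =>
    fisher_nonneg (μ := phaseMeas d) hf (Pi.single i 1, 0)
  rw [Hent_eq_entropy hf hmass, Ifull_eq_sum_fisher hf]
  linarith

end Functionals

/-! ### Solutions as functions on space-time -/

/-- Space-time, with points `(t, x, v)`. -/
abbrev SpaceTime (d : ℕ) := ℝ × (Fin d → ℝ) × (Fin d → ℝ)

/-- The direction of the position coordinate `xᵢ`. -/
def dirX {d : ℕ} (i : Fin d) : SpaceTime d := (0, Pi.single i 1, 0)

/-- The direction of the velocity coordinate `vᵢ`. -/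
def dirV {d : ℕ} (i : Fin d) : SpaceTime d := (0, 0, Pi.single i 1)

/-- A time-dependent function on phase space as a function on space-time. -/
def joint {d : ℕ} (h : ℝ → (Fin d → ℝ) → (Fin d → ℝ) → ℝ) (q : SpaceTime d) : ℝ :=
  h q.1 q.2.1 q.2.2

/-- The spatial density `ρ(t, x) = Πh(t, x)`, written as a mean over the velocity. -/
def density {d : ℕ} (h : ℝ → (Fin d → ℝ) → (Fin d → ℝ) → ℝ) (p : ℝ × (Fin d → ℝ)) : ℝ :=
  ∫ u, h p.1 p.2 u ∂gaussMeas d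

/-- The projection `(t, x, v) ↦ (t, x)`. -/
def forgetVelocity (d : ℕ) : SpaceTime d →L[ℝ] ℝ × (Fin d → ℝ) :=
  (ContinuousLinearMap.id ℝ ℝ).prodMap (.fst ℝ _ _)

theorem forgetVelocity_apply {d : ℕ} (q : SpaceTime d) : forgetVelocity d q = (q.1, q.2.1) := rfl

/-- The material derivative `∂ₜ + v · ∇ₓ`, the derivative along the trajectories of free
transport. -/
def materialDeriv {d : ℕ} (G : SpaceTime d → ℝ) (q : SpaceTime d) : ℝ :=
  fderiv ℝ G q (1, q.2.2, 0)

/-- The `C²` counterpart of `Regular`: only derivatives of order at most two are assumed to exist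
and to be bounded. -/
structure RegularC2 (d : ℕ) (h : ℝ → (Fin d → ℝ) → (Fin d → ℝ) → ℝ) : Prop where
  bddC2 : BddC2 (joint h)
  isPeriodic : ∀ t, IsPeriodic d (h t)
  exists_pos_le : ∃ c > 0, ∀ t x v, c ≤ h t x v

section MaterialDeriv

variable {d : ℕ} {F G S : SpaceTime d → ℝ} {q e : SpaceTime d}

theorem hasDerivAt_trajectory (hG : DifferentiableAt ℝ G q) :
    HasDerivAt (fun s : ℝ => G (q + s • (1, q.2.2, 0))) (materialDeriv G q) 0 :=
  hG.hasFDerivAt.hasLineDerivAt _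

theorem BddC1.materialDeriv_eq (hG : BddC1 G) (t : ℝ) (z : (Fin d → ℝ) × (Fin d → ℝ)) :
    materialDeriv G (t, z)
      = fderiv ℝ G (t, z) (1, 0) + fderiv ℝ (fun z => G (t, z)) z (z.2, 0) := by
  rw [hG.fderiv_slice_right, ← map_add, materialDeriv]
  simp

/-- Differentiating the material derivative of `F` in a direction tangent to the time slices
commutes with it, up to the `x`-derivative along the velocity component of that direction. -/
theorem materialDeriv_fderiv_apply (hF : ContDiff ℝ 2 F) (hS : DifferentiableAt ℝ S q)
    (he : e.1 = 0) (hFS : ∀ r : SpaceTime d, r.1 = q.1 → materialDeriv F r = S r) :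
    materialDeriv (fun r => fderiv ℝ F r e) q
      = fderiv ℝ S q e - fderiv ℝ F q (0, e.2.2, 0) := by
  have hdiff : DifferentiableAt ℝ (fderiv ℝ F) q :=
    (hF.fderiv_right (m := 1) (by norm_num)).differentiable one_ne_zero q
  have hdir : HasLineDerivAt ℝ (fun r : SpaceTime d => ((1, r.2.2, 0) : SpaceTime d))
      (0, e.2.2, 0) q e := by
    have hlin := ((hasDerivAt_id (0 : ℝ)).smul_const e.2.2).const_add q.2.2
    simpa [HasLineDerivAt] using (hasDerivAt_const (0 : ℝ) (1 : ℝ)).prodMk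
      (hlin.prodMk (hasDerivAt_const (0 : ℝ) (0 : Fin d → ℝ)))
  have hline : HasLineDerivAt ℝ (materialDeriv F)
      (fderiv ℝ (fderiv ℝ F) q e (1, q.2.2, 0) + fderiv ℝ F q (0, e.2.2, 0)) q e := by
    simpa [HasLineDerivAt, materialDeriv] using
      HasDerivAt.clm_apply (hdiff.hasFDerivAt.hasLineDerivAt e) hdir
  have hline_eq : (fun s : ℝ => materialDeriv F (q + s • e)) = fun s : ℝ => S (q + s • e) :=
    funext fun s => hFS _ (by simp [he])
  rw [HasLineDerivAt, hline_eq] at hline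
  have hderiv := hline.unique (hS.hasFDerivAt.hasLineDerivAt e)
  have hsymm : IsSymmSndFDerivAt ℝ F q := hF.contDiffAt.isSymmSndFDerivAt (by simp)
  have heval : materialDeriv (fun r => fderiv ℝ F r e) q
      = fderiv ℝ (fderiv ℝ F) q (1, q.2.2, 0) e := by
    simp [materialDeriv, fderiv_clm_apply hdiff (differentiableAt_const e)]
  rw [heval, hsymm.eq, ← hderiv, add_sub_cancel_right]

theorem periodic_fderiv_apply {E : Type*} [NormedAddCommGroup E] [NormedSpace ℝ E] {f : E → ℝ}
    {w : E} (hf : Function.Periodic f w) (e : E) :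
    Function.Periodic (fun x => fderiv ℝ f x e) w := fun x => by
  have hshift : (fun y => f (y + w)) = f := funext hf
  beta_reduce
  rw [← fderiv_comp_add_right, hshift]

end MaterialDeriv

theorem Regular.regularC2 {d : ℕ} {h : ℝ → (Fin d → ℝ) → (Fin d → ℝ) → ℝ} (hR : Regular d h) :
    RegularC2 d h where
  bddC2 := .of_norm_iteratedFDeriv_le
    (hR.1.of_le (WithTop.coe_le_coe.2 (le_top : (2 : ℕ∞) ≤ ⊤))) fun n _ => hR.2.2.2 n
  isPeriodic := hR.2.1
  exists_pos_le := by
    obtain ⟨c, C, hc, hb⟩ := hR.2.2.1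
    exact ⟨c, hc, fun t x v => (hb t x v).1⟩

namespace RegularC2

variable {d : ℕ} {h : ℝ → (Fin d → ℝ) → (Fin d → ℝ) → ℝ}

theorem bddC1Pos (hR : RegularC2 d h) : BddC1Pos (joint h) :=
  ⟨hR.bddC2.toBddC1, hR.exists_pos_le.imp fun _ hc => ⟨hc.1, fun _ => hc.2 _ _ _⟩⟩

theorem bddC1Pos_slice (hR : RegularC2 d h) (t : ℝ) :
    BddC1Pos fun z => joint h (t, z) :=
  hR.bddC1Pos.slice_right t

theorem periodic_joint (hR : RegularC2 d h) (i : Fin d) :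
    Function.Periodic (joint h) (dirX i) := fun q => by
  have hk : (fun j => ((Pi.single i 1 : Fin d → ℤ) j : ℝ)) = Pi.single i 1 := by
    ext j
    simp [Pi.single_apply]
  simpa [joint, dirX, hk] using hR.isPeriodic q.1 q.2.1 q.2.2 (Pi.single i 1)

theorem bddC1Pos_joint_prodAssoc (hR : RegularC2 d h) :
    BddC1Pos fun p : (ℝ × (Fin d → ℝ)) × (Fin d → ℝ) => joint h (p.1.1, p.1.2, p.2) :=
  hR.bddC1Pos.comp_clm
    (ContinuousLinearEquiv.prodAssoc ℝ ℝ (Fin d → ℝ) (Fin d → ℝ)).toContinuousLinearMap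

theorem bddC1Pos_density (hR : RegularC2 d h) : BddC1Pos (density h) :=
  hR.bddC1Pos_joint_prodAssoc.average (gaussMeas d)

theorem fderiv_density (hR : RegularC2 d h) (p e : ℝ × (Fin d → ℝ)) :
    fderiv ℝ (density h) p e
      = ∫ u, fderiv ℝ (joint h) (p.1, p.2, u) (e.1, e.2, 0) ∂gaussMeas d := by
  refine (hR.bddC1Pos_joint_prodAssoc.fderiv_average (gaussMeas d) p e).trans ?_
  congr 1 with u
  exact hR.bddC1Pos.fderiv_comp_clm
    (ContinuousLinearEquiv.prodAssoc ℝ ℝ (Fin d → ℝ) (Fin d → ℝ)).toContinuousLinearMap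
    (p, u) (e, 0)

theorem periodic_density (hR : RegularC2 d h) (i : Fin d) :
    Function.Periodic (fun q => density h (forgetVelocity d q)) (dirX i) := fun q => by
  have hshift (u : Fin d → ℝ) : joint h ((q.1, q.2.1, u) + dirX i) = joint h (q.1, q.2.1, u) :=
    hR.periodic_joint i _
  simp only [joint, dirX, Prod.mk_add_mk, add_zero] at hshift
  simp [density, forgetVelocity, dirX, hshift]

theorem materialDeriv_joint (hR : RegularC2 d h) {lam : ℝ} (hS : SolvesLRB d lam h)
    {q : SpaceTime d} (hq : 0 ≤ q.1) :
    materialDeriv (joint h) q = lam * (density h (forgetVelocity d q) - joint h q) := by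
  obtain ⟨t, x, v⟩ := q
  have hG := hR.bddC1Pos.toBddC1
  have htime : fderiv ℝ (joint h) (t, x, v) (1, 0) = deriv (fun s => h s x v) t := by
    rw [← hG.fderiv_slice_left, fderiv_apply_one_eq_deriv]
    rfl
  have hgradx (i : Fin d) : fderiv ℝ (fun z => joint h (t, z)) (x, v) (Pi.single i 1, 0)
      = gradx d (h t) x v i := ((hG.slice_right t).fderiv_slice_left x _ v).symm
  rw [hG.materialDeriv_eq, clm_inl_eq_sum, htime]
  simp_rw [hgradx]
  simpa [proj_eq_integral, dotp, density, forgetVelocity, joint] using hS t x v hq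

end RegularC2

/-! ### Evolution of integrals over phase space -/

theorem integral_prod_fst_mul {α β : Type*} [MeasurableSpace α] [MeasurableSpace β]
    {μ : Measure α} {ν : Measure β} [SFinite μ] [SFinite ν] {w : α → ℝ} {f : α × β → ℝ}
    (hwf : Integrable (fun z => w z.1 * f z) (μ.prod ν)) :
    ∫ z, w z.1 * f z ∂μ.prod ν = ∫ x, w x * ∫ y, f (x, y) ∂ν ∂μ := by
  rw [integral_prod _ hwf]
  simp only [integral_const_mul]

theorem integral_prod_fst_mul_sub_average {α β : Type*} [MeasurableSpace α] [MeasurableSpace β]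
    {μ : Measure α} {ν : Measure β} [SFinite μ] [IsProbabilityMeasure ν] {w g : α → ℝ}
    {f : α × β → ℝ} (hf : ∀ x, Integrable (fun y => f (x, y)) ν) (hg : ∀ x, g x = ∫ y, f (x, y) ∂ν)
    (hint : Integrable (fun z => w z.1 * (g z.1 - f z)) (μ.prod ν)) :
    ∫ z, w z.1 * (g z.1 - f z) ∂μ.prod ν = 0 := by
  rw [integral_prod_fst_mul (f := fun z => g z.1 - f z) hint]
  simp [integral_sub (integrable_const _) (hf _), ← hg]

section Transport

variable {d : ℕ} {G : SpaceTime d → ℝ}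

theorem BddC1.integrable_materialDeriv (hG : BddC1 G) (t : ℝ) :
    Integrable (fun z => materialDeriv G (t, z)) (phaseMeas d) := by
  simp_rw [hG.materialDeriv_eq]
  exact ((hG.bddCont_fderiv_apply _).comp (.prodMk_right t)).integrable.add
    (integrable_fderiv_transport_phaseMeas (hG.slice_right t))

theorem BddC1.integral_materialDeriv (hG : BddC1 G) (hper : ∀ i, Function.Periodic G (dirX i))
    (t : ℝ) :
    ∫ z, materialDeriv G (t, z) ∂phaseMeas d = ∫ z, fderiv ℝ G (t, z) (1, 0) ∂phaseMeas d := by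
  have hper' (i : Fin d) : Function.Periodic (fun z => G (t, z)) (Pi.single i 1, 0) := fun z => by
    simpa [dirX] using hper i (t, z)
  simp_rw [hG.materialDeriv_eq]
  rw [integral_add ((hG.bddCont_fderiv_apply _).comp (.prodMk_right t)).integrable
    (integrable_fderiv_transport_phaseMeas (hG.slice_right t)),
    integral_fderiv_transport_phaseMeas (hG.slice_right t) hper', add_zero]

/-- Since `μ` is invariant under free transport, the time derivative of a mean is the mean of the
material derivative. -/
theorem BddC1.hasDerivAt_integral (hG : BddC1 G) (hper : ∀ i, Function.Periodic G (dirX i))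
    (t : ℝ) :
    HasDerivAt (fun t => ∫ z, G (t, z) ∂phaseMeas d)
      (∫ z, materialDeriv G (t, z) ∂phaseMeas d) t := by
  have hderiv := (hG.hasFDerivAt_average (phaseMeas d) t).differentiableAt.hasDerivAt
  rwa [← fderiv_apply_one_eq_deriv, hG.fderiv_average (phaseMeas d),
    ← hG.integral_materialDeriv hper] at hderiv

end Transport

theorem integral_mul_coord_mul_phaseMeas {d : ℕ} {w : (Fin d → ℝ) → ℝ}
    {G : (Fin d → ℝ) × (Fin d → ℝ) → ℝ} (hw : BddCont w) (hG : BddC1 G) (i : Fin d) :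
    ∫ z, w z.1 * (z.2 i * G z) ∂phaseMeas d
      = ∫ z, w z.1 * fderiv ℝ G z (0, Pi.single i 1) ∂phaseMeas d := by
  have hw' : BddCont fun z : (Fin d → ℝ) × (Fin d → ℝ) => w z.1 := hw.comp continuous_fst
  have hcoord : Integrable (fun z : (Fin d → ℝ) × (Fin d → ℝ) => w z.1 * (z.2 i * G z))
      (phaseMeas d) := by
    simpa only [mul_left_comm] using integrable_snd_coord_mul i (hw'.mul hG.bddCont)
  rw [integral_prod_fst_mul (f := fun z : (Fin d → ℝ) × (Fin d → ℝ) => z.2 i * G z) hcoord,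
    integral_prod_fst_mul (hw'.mul (hG.bddCont_fderiv_apply _)).integrable]
  simp_rw [integral_coord_mul_gaussMeas (hG.slice_right _), hG.fderiv_slice_right]

namespace RegularC2

variable {d : ℕ} {h : ℝ → (Fin d → ℝ) → (Fin d → ℝ) → ℝ} {w : (Fin d → ℝ) → ℝ}

theorem bddC1Pos_density_forgetVelocity (hR : RegularC2 d h) :
    BddC1Pos fun q => density h (forgetVelocity d q) :=
  hR.bddC1Pos_density.comp_clm _

theorem bddCont_density_sub (hR : RegularC2 d h) (t : ℝ) :
    BddCont fun z : (Fin d → ℝ) × (Fin d → ℝ) => density h (t, z.1) - joint h (t, z) :=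
  (hR.bddC1Pos_density.bddCont.comp (by fun_prop)).sub (hR.bddC1Pos_slice t).bddCont

theorem bddCont_fderiv_joint (hR : RegularC2 d h) (t : ℝ) (e : SpaceTime d) :
    BddCont fun z => fderiv ℝ (joint h) (t, z) e :=
  (hR.bddC1Pos.bddCont_fderiv_apply e).comp (.prodMk_right t)

theorem bddCont_fderiv_density_sub (hR : RegularC2 d h) (t : ℝ) (e : ℝ × (Fin d → ℝ))
    (e' : SpaceTime d) :
    BddCont fun z => fderiv ℝ (density h) (t, z.1) e - fderiv ℝ (joint h) (t, z) e' :=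
  ((hR.bddC1Pos_density.bddCont_fderiv_apply e).comp (by fun_prop)).sub
    (hR.bddCont_fderiv_joint t e')

theorem integral_mul_density_sub (hR : RegularC2 d h) (hw : BddCont w) (t : ℝ) :
    ∫ z, w z.1 * (density h (t, z.1) - joint h (t, z)) ∂phaseMeas d = 0 :=
  integral_prod_fst_mul_sub_average (g := fun x => density h (t, x))
    (f := fun z => joint h (t, z)) (fun x => ((hR.bddC1Pos_slice t).slice_right x).integrable)
    (fun _ => rfl) ((hw.comp continuous_fst).mul (hR.bddCont_density_sub t)).integrable

theorem integral_mul_fderiv_density_sub (hR : RegularC2 d h) (hw : BddCont w) (t : ℝ)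
    (e : ℝ × (Fin d → ℝ)) :
    ∫ z, w z.1 * (fderiv ℝ (density h) (t, z.1) e
      - fderiv ℝ (joint h) (t, z) (e.1, e.2, 0)) ∂phaseMeas d = 0 :=
  integral_prod_fst_mul_sub_average (g := fun x => fderiv ℝ (density h) (t, x) e)
    (f := fun z => fderiv ℝ (joint h) (t, z) (e.1, e.2, 0))
    (fun x => ((hR.bddCont_fderiv_joint t _).comp (.prodMk_right x)).integrable)
    (fun x => hR.fderiv_density (t, x) e)
    ((hw.comp continuous_fst).mul (hR.bddCont_fderiv_density_sub t e _)).integrable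

end RegularC2

/-! ### Evolution of the projected entropy -/

/-- The `i`-th component of `∇ₓ log ρ`. -/
def score {d : ℕ} (h : ℝ → (Fin d → ℝ) → (Fin d → ℝ) → ℝ) (i : Fin d) (p : ℝ × (Fin d → ℝ)) : ℝ :=
  fderiv ℝ (density h) p (0, Pi.single i 1) / density h p

theorem materialDeriv_log_mul {d : ℕ} {F G : SpaceTime d → ℝ} {q : SpaceTime d}
    (hF : DifferentiableAt ℝ F q) (hG : DifferentiableAt ℝ G q) (hq : F q ≠ 0) :
    materialDeriv (fun q => Real.log (F q) * G q) q
      = materialDeriv F q / F q * G q + Real.log (F q) * materialDeriv G q := by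
  have htraj := ((hasDerivAt_trajectory hF).log (by simpa)).fun_mul (hasDerivAt_trajectory hG)
  simpa using (hasDerivAt_trajectory ((hF.log hq).fun_mul hG)).unique htraj

namespace RegularC2

variable {d : ℕ} {h : ℝ → (Fin d → ℝ) → (Fin d → ℝ) → ℝ} {lam t : ℝ}

theorem integral_materialDeriv_joint (hR : RegularC2 d h) (hS : SolvesLRB d lam h) (ht : 0 ≤ t) :
    ∫ z, materialDeriv (joint h) (t, z) ∂phaseMeas d = 0 := by
  have hrelax (z : (Fin d → ℝ) × (Fin d → ℝ)) := hR.materialDeriv_joint hS (q := (t, z)) ht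
  simp_rw [hrelax]
  exact hR.integral_mul_density_sub (.const lam) t

theorem integral_joint_eq (hR : RegularC2 d h) (hS : SolvesLRB d lam h) (ht : 0 ≤ t) :
    ∫ z, joint h (t, z) ∂phaseMeas d = ∫ z, joint h (0, z) ∂phaseMeas d := by
  have hderiv := hR.bddC1Pos.hasDerivAt_integral hR.periodic_joint
  refine constant_of_has_deriv_right_zero (a := 0) (b := t)
    (fun s _ => (hderiv s).continuousAt.continuousWithinAt) (fun s hs => ?_) t ⟨ht, le_rfl⟩
  simpa only [hR.integral_materialDeriv_joint hS hs.1] using (hderiv s).hasDerivWithinAt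

theorem integral_fderiv_density_time (hR : RegularC2 d h) (hS : SolvesLRB d lam h) (ht : 0 ≤ t) :
    ∫ z, fderiv ℝ (density h) (t, z.1) (1, 0) ∂phaseMeas d = 0 := by
  have hdensity : Integrable (fun z => fderiv ℝ (density h) (t, z.1) (1, 0)) (phaseMeas d) :=
    ((hR.bddC1Pos_density.bddCont_fderiv_apply _).comp (by fun_prop)).integrable
  have hsub := hR.integral_mul_fderiv_density_sub (.const 1) t (1, 0)
  simp only [one_mul] at hsub
  rw [integral_sub hdensity (hR.bddCont_fderiv_joint t _).integrable, sub_eq_zero] at hsub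
  rw [hsub, ← hR.integral_materialDeriv_joint hS ht,
    hR.bddC1Pos.integral_materialDeriv hR.periodic_joint]
  rfl

theorem bddC1_log_density_mul (hR : RegularC2 d h) :
    BddC1 fun q => Real.log (density h (forgetVelocity d q)) * joint h q :=
  hR.bddC1Pos_density_forgetVelocity.log.mul hR.bddC1Pos.toBddC1

theorem bddCont_score (hR : RegularC2 d h) (i : Fin d) (t : ℝ) :
    BddCont fun x => score h i (t, x) :=
  ((hR.bddC1Pos_density.bddCont_fderiv_apply _).mul hR.bddC1Pos_density.inv.bddCont).comp
    (.prodMk_right t)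

theorem HPi_eq_integral (hR : RegularC2 d h) (t : ℝ) :
    HPi d (h t) = ∫ z, Real.log (density h (t, z.1)) * joint h (t, z) ∂phaseMeas d := by
  have hint : Integrable (fun z => Real.log (density h (t, z.1)) * joint h (t, z)) (phaseMeas d) :=
    (hR.bddC1_log_density_mul.slice_right t).integrable
  rw [integral_prod_fst_mul (w := fun x => Real.log (density h (t, x)))
    (f := fun z => joint h (t, z)) hint, HPi, cubeMeas_eq_restrict_cube]
  simp_rw [proj_eq_integral, mul_comm _ (Real.log _)]
  rfl

theorem materialDeriv_density (hR : RegularC2 d h) (q : SpaceTime d) :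
    materialDeriv (fun q => density h (forgetVelocity d q)) q
      = fderiv ℝ (density h) (forgetVelocity d q) (1, 0)
        + ∑ i, q.2.2 i * fderiv ℝ (density h) (forgetVelocity d q) (0, Pi.single i 1) := by
  have hsum := clm_apply_eq_sum ((fderiv ℝ (density h) (forgetVelocity d q)).comp
    (.inr ℝ ℝ (Fin d → ℝ))) q.2.2
  simp only [ContinuousLinearMap.comp_apply, ContinuousLinearMap.inr_apply] at hsum
  rw [materialDeriv, hR.bddC1Pos_density.fderiv_comp_clm, ← hsum, ← map_add]
  simp [forgetVelocity]

/-- The last term carries the dynamics; the others have mean zero. -/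
theorem materialDeriv_log_density_mul (hR : RegularC2 d h) (hS : SolvesLRB d lam h) (ht : 0 ≤ t)
    (z : (Fin d → ℝ) × (Fin d → ℝ)) :
    materialDeriv (fun q => Real.log (density h (forgetVelocity d q)) * joint h q) (t, z)
      = fderiv ℝ (density h) (t, z.1) (1, 0)
        + (lam * Real.log (density h (t, z.1))
            - fderiv ℝ (density h) (t, z.1) (1, 0) / density h (t, z.1))
          * (density h (t, z.1) - joint h (t, z))
        + ∑ i, score h i (t, z.1) * (z.2 i * joint h (t, z)) := by
  have hne : density h (t, z.1) ≠ 0 := (hR.bddC1Pos_density.pos _).ne'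
  have hflux : ∑ i, score h i (t, z.1) * (z.2 i * joint h (t, z))
      = (∑ i, z.2 i * fderiv ℝ (density h) (t, z.1) (0, Pi.single i 1)) / density h (t, z.1)
        * joint h (t, z) := by
    simp only [score, Finset.sum_div, Finset.sum_mul]
    exact Finset.sum_congr rfl fun i _ => by ring
  rw [materialDeriv_log_mul (hR.bddC1Pos_density_forgetVelocity.differentiable _)
    (hR.bddC1Pos.differentiable _) hne, hR.materialDeriv_density, hR.materialDeriv_joint hS ht,
    hflux]
  simp only [forgetVelocity_apply]
  field_simp
  ring

theorem integral_materialDeriv_log_density_mul (hR : RegularC2 d h) (hS : SolvesLRB d lam h)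
    (ht : 0 ≤ t) :
    ∫ z, materialDeriv (fun q => Real.log (density h (forgetVelocity d q)) * joint h q) (t, z)
        ∂phaseMeas d
      = ∑ i, ∫ z, score h i (t, z.1) * fderiv ℝ (joint h) (t, z) (dirV i) ∂phaseMeas d := by
  have hfst {w : (Fin d → ℝ) → ℝ} (hw : BddCont w) :
      BddCont fun z : (Fin d → ℝ) × (Fin d → ℝ) => w z.1 := hw.comp continuous_fst
  have hslice : Continuous fun x : Fin d → ℝ => (t, x) := .prodMk_right t
  have htime : BddCont fun x => fderiv ℝ (density h) (t, x) (1, 0) :=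
    (hR.bddC1Pos_density.bddCont_fderiv_apply _).comp hslice
  have hweight : BddCont fun x => lam * Real.log (density h (t, x))
      - fderiv ℝ (density h) (t, x) (1, 0) / density h (t, x) :=
    ((BddCont.const lam).mul (hR.bddC1Pos_density.log.bddCont.comp hslice)).sub
      (htime.mul (hR.bddC1Pos_density.inv.bddCont.comp hslice))
  have hrelax := (hfst hweight).mul (hR.bddCont_density_sub t)
  have hflux (i : Fin d) : Integrable
      (fun z => score h i (t, z.1) * (z.2 i * joint h (t, z))) (phaseMeas d) := by
    simpa only [mul_left_comm] using
      integrable_snd_coord_mul i ((hfst (hR.bddCont_score i t)).mul (hR.bddC1Pos_slice t).bddCont)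
  simp_rw [hR.materialDeriv_log_density_mul hS ht]
  rw [integral_add ((hfst htime).add hrelax).integrable
    (integrable_finsetSum _ fun i _ => hflux i),
    integral_add (hfst htime).integrable hrelax.integrable, hR.integral_fderiv_density_time hS ht,
    hR.integral_mul_density_sub hweight, integral_finsetSum _ fun i _ => hflux i]
  simp only [zero_add]
  refine Finset.sum_congr rfl fun i _ => ?_
  rw [integral_mul_coord_mul_phaseMeas (hR.bddCont_score i t) (hR.bddC1Pos_slice t).toBddC1]
  simp_rw [hR.bddC1Pos.fderiv_slice_right]
  rfl

theorem hasDerivAt_HPi (hR : RegularC2 d h) (hS : SolvesLRB d lam h) (ht : 0 ≤ t) :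
    HasDerivAt (fun s => HPi d (h s))
      (∑ i, ∫ z, score h i (t, z.1) * fderiv ℝ (joint h) (t, z) (dirV i) ∂phaseMeas d) t := by
  have hper (i : Fin d) : Function.Periodic
      (fun q => Real.log (density h (forgetVelocity d q)) * joint h q) (dirX i) := fun q => by
    have hdensity := hR.periodic_density i q
    have hjoint := hR.periodic_joint i q
    simp only at hdensity ⊢
    rw [hdensity, hjoint]
  rw [funext hR.HPi_eq_integral, ← hR.integral_materialDeriv_log_density_mul hS ht]
  exact hR.bddC1_log_density_mul.hasDerivAt_integral hper t

end RegularC2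

/-! ### Dissipation of the Lyapunov functional -/

/-- The quadratic form `a p² + 2 p q + 2 q²` of the modified Fisher information, in one coordinate
of `(∇ₓ, ∇ᵥ)`. -/
def fisherForm (a p q : ℝ) : ℝ := a * p ^ 2 + 2 * (p * q) + 2 * q ^ 2

/-- The coefficient `a` of `|∇ₓ h|² / h` in the modified Fisher information, chosen so that
`(2 + λ)² ≤ a λ²`. -/
def gradWeight (lam : ℝ) : ℝ := 2 + (2 + lam) ^ 2 / lam ^ 2

/-- The coefficient `β` of the projected entropy in the Lyapunov functional. -/
def entropyWeight (lam : ℝ) : ℝ := 2 * (2 + lam)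

theorem two_le_gradWeight (lam : ℝ) : 2 ≤ gradWeight lam :=
  le_add_of_nonneg_right (by positivity)

theorem sq_mul_gradWeight {lam : ℝ} (hlam : lam ≠ 0) :
    lam ^ 2 * gradWeight lam = 2 * lam ^ 2 + (2 + lam) ^ 2 := by
  unfold gradWeight
  field_simp

section Algebra

variable {a lam p q P r H : ℝ}

theorem fisherForm_eq_add_sq (a p q : ℝ) :
    fisherForm a p q = (a - 2) * p ^ 2 + (p + q) ^ 2 + p ^ 2 + q ^ 2 := by
  unfold fisherForm
  ring

theorem sq_add_sq_le_fisherForm (ha : 2 ≤ a) (p q : ℝ) : p ^ 2 + q ^ 2 ≤ fisherForm a p q := by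
  have : 0 ≤ (a - 2) * p ^ 2 := mul_nonneg (sub_nonneg.2 ha) (sq_nonneg p)
  linarith [fisherForm_eq_add_sq a p q, sq_nonneg (p + q)]

theorem fisherForm_le (a p q : ℝ) : fisherForm a p q ≤ (a + 1) * p ^ 2 + 3 * q ^ 2 := by
  unfold fisherForm
  linarith [sq_nonneg (p - q), sub_sq p q]

theorem relaxationForm_nonneg (hlam : 0 < lam) (p q : ℝ) :
    0 ≤ lam * gradWeight lam * p ^ 2 + 2 * (2 + lam) * (p * q) + lam * q ^ 2 := by
  refine nonneg_of_mul_nonneg_right (a := lam) ?_ hlam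
  have hsq : lam * (lam * gradWeight lam * p ^ 2 + 2 * (2 + lam) * (p * q) + lam * q ^ 2)
      = 2 * lam ^ 2 * p ^ 2 + ((2 + lam) * p + lam * q) ^ 2 := by
    linear_combination p ^ 2 * sq_mul_gradWeight hlam.ne'
  rw [hsq]
  positivity

theorem hasDerivAt_fisherForm_div {X V H : ℝ → ℝ} {X' V' H' s : ℝ} (hX : HasDerivAt X X' s)
    (hV : HasDerivAt V V' s) (hH : HasDerivAt H H' s) (hs : H s ≠ 0) (a : ℝ) :
    HasDerivAt (fun s => fisherForm a (X s) (V s) / H s)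
      ((2 * a * X s * X' + 2 * (X' * V s + X s * V') + 4 * V s * V') / H s
        - fisherForm a (X s) (V s) * H' / H s ^ 2) s := by
  have hform := (((hX.fun_pow 2).const_mul a).fun_add ((hX.fun_mul hV).const_mul 2)).fun_add
    ((hV.fun_pow 2).const_mul 2)
  refine (hform.fun_div hH hs).congr_deriv ?_
  unfold fisherForm
  field_simp
  ring

/-- In terms of `x = p / H`, `y = q / H`, `z = P / r`, the difference of the two sides is the sum of
two nonpositive quadratic forms in `(x - z, y)`. -/
theorem dissipation_le (hlam : 0 < lam) (hr : 0 < r) (hH : 0 < H) :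
    (2 * gradWeight lam * p * (lam * (P - p)) + 2 * (lam * (P - p) * q + p * (-p - lam * q))
        + 4 * q * (-p - lam * q)) / H
      - fisherForm (gradWeight lam) p q * (lam * (r - H)) / H ^ 2
      + entropyWeight lam * (P / r * q)
      ≤ -(2 * (p ^ 2 / H) + lam * (q ^ 2 / H))
        + lam * gradWeight lam * (2 * (P / r) * (P - p) - (P / r) ^ 2 * (r - H)) := by
  obtain ⟨x, rfl⟩ : ∃ x, p = H * x := ⟨p / H, by field_simp⟩
  obtain ⟨y, rfl⟩ : ∃ y, q = H * y := ⟨q / H, by field_simp⟩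
  obtain ⟨z, rfl⟩ : ∃ z, P = r * z := ⟨P / r, by field_simp⟩
  have hform : 0 ≤ lam * r * fisherForm (gradWeight lam) (x - z) y := by
    have := (add_nonneg (sq_nonneg _) (sq_nonneg _)).trans
      (sq_add_sq_le_fisherForm (two_le_gradWeight lam) (x - z) y)
    positivity
  have hrelax := mul_nonneg hH.le (relaxationForm_nonneg hlam (x - z) y)
  rw [← sub_nonneg]
  refine (add_nonneg hform hrelax).trans_eq ?_
  unfold fisherForm entropyWeight
  field_simp
  ring

end Algebra

/-- The density of the `i`-th part of the modified Fisher information. -/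
def modifiedFisherDensity {d : ℕ} (lam : ℝ) (h : ℝ → (Fin d → ℝ) → (Fin d → ℝ) → ℝ) (i : Fin d)
    (q : SpaceTime d) : ℝ :=
  fisherForm (gradWeight lam) (fderiv ℝ (joint h) q (dirX i)) (fderiv ℝ (joint h) q (dirV i))
    / joint h q

/-- The modified Fisher information at time `t`. -/
def modifiedFisher {d : ℕ} (lam : ℝ) (h : ℝ → (Fin d → ℝ) → (Fin d → ℝ) → ℝ) (t : ℝ) : ℝ :=
  ∑ i, ∫ z, modifiedFisherDensity lam h i (t, z) ∂phaseMeas d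

/-- The Lyapunov functional: the modified Fisher information plus `β H_Π`. -/
def lyapunov {d : ℕ} (lam : ℝ) (h : ℝ → (Fin d → ℝ) → (Fin d → ℝ) → ℝ) (t : ℝ) : ℝ :=
  modifiedFisher lam h t + entropyWeight lam * HPi d (h t)

/-- The part `∫ |∇ₓ h|² / h dμ` of the Fisher information at time `t`. -/
def fisherX {d : ℕ} (h : ℝ → (Fin d → ℝ) → (Fin d → ℝ) → ℝ) (t : ℝ) : ℝ :=
  ∑ i, fisher (phaseMeas d) (fun z => joint h (t, z)) (Pi.single i 1, 0)

/-- The part `∫ |∇ᵥ h|² / h dμ` of the Fisher information at time `t`. -/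
def fisherV {d : ℕ} (h : ℝ → (Fin d → ℝ) → (Fin d → ℝ) → ℝ) (t : ℝ) : ℝ :=
  ∑ i, fisher (phaseMeas d) (fun z => joint h (t, z)) (0, Pi.single i 1)

/-- The terms of the dissipation that average to zero over the velocity. -/
def dissipationDefect {d : ℕ} (h : ℝ → (Fin d → ℝ) → (Fin d → ℝ) → ℝ) (i : Fin d)
    (q : SpaceTime d) : ℝ :=
  2 * score h i (q.1, q.2.1)
      * (fderiv ℝ (density h) (q.1, q.2.1) (0, Pi.single i 1) - fderiv ℝ (joint h) q (dirX i))
    - score h i (q.1, q.2.1) ^ 2 * (density h (q.1, q.2.1) - joint h q)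

namespace RegularC2

variable {d : ℕ} {h : ℝ → (Fin d → ℝ) → (Fin d → ℝ) → ℝ} {lam t : ℝ}

theorem materialDeriv_fderiv_joint (hR : RegularC2 d h) (hS : SolvesLRB d lam h)
    {q e : SpaceTime d} (hq : 0 ≤ q.1) (he : e.1 = 0) :
    materialDeriv (fun r => fderiv ℝ (joint h) r e) q
      = lam * (fderiv ℝ (density h) (q.1, q.2.1) (0, e.2.1) - fderiv ℝ (joint h) q e)
        - fderiv ℝ (joint h) q (0, e.2.2, 0) := by
  have hdensity := hR.bddC1Pos_density_forgetVelocity.differentiable q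
  have hjoint := hR.bddC1Pos.differentiable q
  rw [materialDeriv_fderiv_apply hR.bddC2.contDiff_two ((hdensity.fun_sub hjoint).const_mul lam) he
    fun r hr => hR.materialDeriv_joint hS (hr ▸ hq), fderiv_const_mul (hdensity.fun_sub hjoint),
    fderiv_fun_sub hdensity hjoint]
  have hslope := hR.bddC1Pos_density.fderiv_comp_clm (forgetVelocity d) q e
  rw [forgetVelocity_apply, forgetVelocity_apply, he] at hslope
  simp [hslope]

theorem bddC1_modifiedFisherDensity (hR : RegularC2 d h) (lam : ℝ) (i : Fin d) :
    BddC1 (modifiedFisherDensity lam h i) := by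
  have hX := hR.bddC2.fderiv_apply (dirX i)
  have hV := hR.bddC2.fderiv_apply (dirV i)
  exact (((hX.sq.const_mul _).add ((hX.mul hV).const_mul 2)).add (hV.sq.const_mul 2)).mul
    hR.bddC1Pos.inv

theorem periodic_modifiedFisherDensity (hR : RegularC2 d h) (lam : ℝ) (i j : Fin d) :
    Function.Periodic (modifiedFisherDensity lam h i) (dirX j) := fun q => by
  have hX := periodic_fderiv_apply (hR.periodic_joint j) (dirX i) q
  have hV := periodic_fderiv_apply (hR.periodic_joint j) (dirV i) q
  simp only at hX hV
  simp only [modifiedFisherDensity, hX, hV, hR.periodic_joint j q]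

theorem materialDeriv_modifiedFisherDensity (hR : RegularC2 d h) (i : Fin d) (q : SpaceTime d) :
    materialDeriv (modifiedFisherDensity lam h i) q
      = (2 * gradWeight lam * fderiv ℝ (joint h) q (dirX i)
            * materialDeriv (fun r => fderiv ℝ (joint h) r (dirX i)) q
          + 2 * (materialDeriv (fun r => fderiv ℝ (joint h) r (dirX i)) q
              * fderiv ℝ (joint h) q (dirV i)
            + fderiv ℝ (joint h) q (dirX i)
              * materialDeriv (fun r => fderiv ℝ (joint h) r (dirV i)) q)
          + 4 * fderiv ℝ (joint h) q (dirV i)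
            * materialDeriv (fun r => fderiv ℝ (joint h) r (dirV i)) q) / joint h q
        - fisherForm (gradWeight lam) (fderiv ℝ (joint h) q (dirX i))
            (fderiv ℝ (joint h) q (dirV i)) * materialDeriv (joint h) q / joint h q ^ 2 := by
  have htraj := hasDerivAt_fisherForm_div
    (hasDerivAt_trajectory ((hR.bddC2.fderiv_apply (dirX i)).differentiable q))
    (hasDerivAt_trajectory ((hR.bddC2.fderiv_apply (dirV i)).differentiable q))
    (hasDerivAt_trajectory (hR.bddC1Pos.differentiable q))
    (by simpa using (hR.bddC1Pos.pos q).ne') (gradWeight lam)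
  simpa using (hasDerivAt_trajectory
    ((hR.bddC1_modifiedFisherDensity lam i).differentiable q)).unique htraj

theorem materialDeriv_modifiedFisherDensity_le (hR : RegularC2 d h) (hlam : 0 < lam)
    (hS : SolvesLRB d lam h) {q : SpaceTime d} (hq : 0 ≤ q.1) (i : Fin d) :
    materialDeriv (modifiedFisherDensity lam h i) q
      + entropyWeight lam * (score h i (q.1, q.2.1) * fderiv ℝ (joint h) q (dirV i))
      ≤ -(2 * (fderiv ℝ (joint h) q (dirX i) ^ 2 / joint h q)
          + lam * (fderiv ℝ (joint h) q (dirV i) ^ 2 / joint h q))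
        + lam * gradWeight lam * dissipationDefect h i q := by
  have hX : materialDeriv (fun r => fderiv ℝ (joint h) r (dirX i)) q
      = lam * (fderiv ℝ (density h) (q.1, q.2.1) (0, Pi.single i 1)
        - fderiv ℝ (joint h) q (dirX i)) := by
    simpa [dirX, ← Prod.zero_eq_mk] using hR.materialDeriv_fderiv_joint hS hq (e := dirX i) rfl
  have hV : materialDeriv (fun r => fderiv ℝ (joint h) r (dirV i)) q
      = -fderiv ℝ (joint h) q (dirX i) - lam * fderiv ℝ (joint h) q (dirV i) := by
    rw [hR.materialDeriv_fderiv_joint hS hq rfl]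
    simp only [dirV, ← Prod.zero_eq_mk, map_zero, zero_sub, mul_neg, dirX]
    ring
  rw [hR.materialDeriv_modifiedFisherDensity, hX, hV, hR.materialDeriv_joint hS hq]
  exact dissipation_le hlam (hR.bddC1Pos_density.pos _) (hR.bddC1Pos.pos q)

theorem bddCont_score_fst (hR : RegularC2 d h) (i : Fin d) (t : ℝ) :
    BddCont fun z : (Fin d → ℝ) × (Fin d → ℝ) => score h i (t, z.1) :=
  (hR.bddCont_score i t).comp continuous_fst

theorem integrable_dissipationDefect (hR : RegularC2 d h) (t : ℝ) (i : Fin d) :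
    Integrable (fun z => dissipationDefect h i (t, z)) (phaseMeas d) :=
  ((((BddCont.const 2).mul (hR.bddCont_score_fst i t)).mul
    (hR.bddCont_fderiv_density_sub t _ _)).sub
    (((hR.bddCont_score_fst i t).pow 2).mul (hR.bddCont_density_sub t))).integrable

theorem integral_dissipationDefect (hR : RegularC2 d h) (t : ℝ) (i : Fin d) :
    ∫ z, dissipationDefect h i (t, z) ∂phaseMeas d = 0 := by
  have hscore := hR.bddCont_score_fst i t
  unfold dissipationDefect
  rw [integral_sub
    (((BddCont.const 2).mul hscore).mul (hR.bddCont_fderiv_density_sub t _ _)).integrable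
    ((hscore.pow 2).mul (hR.bddCont_density_sub t)).integrable,
    hR.integral_mul_density_sub ((hR.bddCont_score i t).pow 2), sub_zero]
  exact hR.integral_mul_fderiv_density_sub ((BddCont.const 2).mul (hR.bddCont_score i t)) t
    (0, Pi.single i 1)

theorem integral_materialDeriv_modifiedFisherDensity_le (hR : RegularC2 d h) (hlam : 0 < lam)
    (hS : SolvesLRB d lam h) (ht : 0 ≤ t) (i : Fin d) :
    ∫ z, materialDeriv (modifiedFisherDensity lam h i) (t, z) ∂phaseMeas d
      + entropyWeight lam
        * ∫ z, score h i (t, z.1) * fderiv ℝ (joint h) (t, z) (dirV i) ∂phaseMeas d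
      ≤ -(2 * fisher (phaseMeas d) (fun z => joint h (t, z)) (Pi.single i 1, 0)
        + lam * fisher (phaseMeas d) (fun z => joint h (t, z)) (0, Pi.single i 1)) := by
  have hmat := (hR.bddC1_modifiedFisherDensity lam i).integrable_materialDeriv t
  have hflux : Integrable (fun z => score h i (t, z.1) * fderiv ℝ (joint h) (t, z) (dirV i))
      (phaseMeas d) :=
    ((hR.bddCont_score_fst i t).mul (hR.bddCont_fderiv_joint t _)).integrable
  have hX := ((hR.bddC1Pos_slice t).bddCont_sq_fderiv_div (Pi.single i 1, 0)).integrable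
    (μ := phaseMeas d)
  have hV := ((hR.bddC1Pos_slice t).bddCont_sq_fderiv_div (0, Pi.single i 1)).integrable
    (μ := phaseMeas d)
  have hdefect := hR.integrable_dissipationDefect t i
  have hmono := integral_mono (hmat.add (hflux.const_mul (entropyWeight lam)))
    (((hX.const_mul 2).add (hV.const_mul lam)).neg.add
      (hdefect.const_mul (lam * gradWeight lam))) fun z => by
      simpa only [Pi.add_apply, Pi.neg_apply, hR.bddC1Pos.fderiv_slice_right, dirX, dirV] using
        hR.materialDeriv_modifiedFisherDensity_le hlam hS (q := (t, z)) ht i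
  rwa [integral_add' hmat (hflux.const_mul _), integral_const_mul,
    integral_add' ((hX.const_mul 2).add (hV.const_mul lam)).neg (hdefect.const_mul _),
    integral_const_mul, hR.integral_dissipationDefect, mul_zero, add_zero, integral_neg',
    integral_add' (hX.const_mul 2) (hV.const_mul lam), integral_const_mul,
    integral_const_mul] at hmono

theorem hasDerivAt_lyapunov (hR : RegularC2 d h) (hS : SolvesLRB d lam h) (ht : 0 ≤ t) :
    HasDerivAt (lyapunov lam h)
      (∑ i, (∫ z, materialDeriv (modifiedFisherDensity lam h i) (t, z) ∂phaseMeas d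
        + entropyWeight lam
          * ∫ z, score h i (t, z.1) * fderiv ℝ (joint h) (t, z) (dirV i) ∂phaseMeas d)) t := by
  rw [Finset.sum_add_distrib, ← Finset.mul_sum]
  exact (HasDerivAt.fun_sum fun i _ => (hR.bddC1_modifiedFisherDensity lam i).hasDerivAt_integral
    (hR.periodic_modifiedFisherDensity lam i) t).fun_add ((hR.hasDerivAt_HPi hS ht).const_mul _)

theorem deriv_lyapunov_le (hR : RegularC2 d h) (hlam : 0 < lam) (hS : SolvesLRB d lam h)
    (ht : 0 ≤ t) : deriv (lyapunov lam h) t ≤ -(2 * fisherX h t + lam * fisherV h t) := by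
  rw [(hR.hasDerivAt_lyapunov hS ht).deriv, fisherX, fisherV, Finset.mul_sum, Finset.mul_sum,
    ← Finset.sum_add_distrib, ← Finset.sum_neg_distrib]
  exact Finset.sum_le_sum fun i _ =>
    hR.integral_materialDeriv_modifiedFisherDensity_le hlam hS ht i

end RegularC2

/-! ### Exponential decay -/

theorem le_exp_mul_of_deriv_le {E : ℝ → ℝ} {r t : ℝ}
    (hE : ∀ s, 0 ≤ s → DifferentiableAt ℝ E s) (hderiv : ∀ s, 0 ≤ s → deriv E s ≤ -r * E s)
    (ht : 0 ≤ t) : E t ≤ Real.exp (-r * t) * E 0 := by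
  have hgronwall := le_gronwallBound_of_liminf_deriv_right_le (K := -r) (ε := 0)
    (fun s hs => (hE s hs.1).continuousAt.continuousWithinAt)
    (fun s hs _ hslope => (hE s hs.1).hasDerivAt.hasDerivWithinAt.liminf_right_slope_le hslope)
    le_rfl (fun s hs => by simpa using hderiv s hs.1) t ⟨ht, le_rfl⟩
  rwa [gronwallBound_ε0, sub_zero, mul_comm] at hgronwall

/-- The rate of decay `Λ` of the Lyapunov functional. -/
def decayRate (lam : ℝ) : ℝ := min (2 / (gradWeight lam + 1 + entropyWeight lam)) (lam / 3)

theorem gradWeight_pos (lam : ℝ) : 0 < gradWeight lam :=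
  two_pos.trans_le (two_le_gradWeight lam)

theorem entropyWeight_pos {lam : ℝ} (hlam : 0 < lam) : 0 < entropyWeight lam := by
  unfold entropyWeight
  positivity

theorem decayRate_pos {lam : ℝ} (hlam : 0 < lam) : 0 < decayRate lam := by
  have ha := gradWeight_pos lam
  have hb := entropyWeight_pos hlam
  exact lt_min (by positivity) (by positivity)

theorem decayRate_mul_le {lam : ℝ} (hlam : 0 < lam) :
    decayRate lam * (gradWeight lam + 1 + entropyWeight lam) ≤ 2 := by
  have ha := gradWeight_pos lam
  have hb := entropyWeight_pos hlam
  exact (le_div_iff₀ (by positivity)).1 (min_le_left _ _)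

theorem decayRate_mul_three_le (lam : ℝ) : decayRate lam * 3 ≤ lam :=
  (le_div_iff₀ three_pos).1 (min_le_right _ _)

namespace RegularC2

variable {d : ℕ} {h : ℝ → (Fin d → ℝ) → (Fin d → ℝ) → ℝ} {lam t : ℝ}

theorem intMu_eq_one (hR : RegularC2 d h) (hS : SolvesLRB d lam h) (hmass : intMu d (h 0) = 1)
    (ht : 0 ≤ t) : intMu d (h t) = 1 := by
  have hjoint (s : ℝ) : intMu d (h s) = ∫ z, joint h (s, z) ∂phaseMeas d :=
    intMu_eq_integral (hR.bddC1Pos_slice s).bddCont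
  rw [hjoint, hR.integral_joint_eq hS ht, ← hjoint, hmass]

theorem fisherX_nonneg (hR : RegularC2 d h) (t : ℝ) : 0 ≤ fisherX h t :=
  Finset.sum_nonneg fun _ _ => fisher_nonneg (hR.bddC1Pos_slice t) _

theorem fisherV_nonneg (hR : RegularC2 d h) (t : ℝ) : 0 ≤ fisherV h t :=
  Finset.sum_nonneg fun _ _ => fisher_nonneg (hR.bddC1Pos_slice t) _

theorem Ifull_eq (hR : RegularC2 d h) (t : ℝ) : Ifull d (h t) = fisherX h t + fisherV h t :=
  Ifull_eq_sum_fisher (hR.bddC1Pos_slice t)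

theorem HPi_le_fisherX (hR : RegularC2 d h) (hmass : intMu d (h t) = 1) :
    HPi d (h t) ≤ fisherX h t :=
  HPi_le_sum_fisher (hR.bddC1Pos_slice t) hmass

theorem le_modifiedFisher (hR : RegularC2 d h) (lam t : ℝ) :
    fisherX h t + fisherV h t ≤ modifiedFisher lam h t := by
  rw [fisherX, fisherV, modifiedFisher, ← Finset.sum_add_distrib]
  refine Finset.sum_le_sum fun i _ => ?_
  have hslice := hR.bddC1Pos_slice t
  have hX := (hslice.bddCont_sq_fderiv_div (Pi.single i 1, 0)).integrable (μ := phaseMeas d)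
  have hV := (hslice.bddCont_sq_fderiv_div (0, Pi.single i 1)).integrable (μ := phaseMeas d)
  rw [fisher, fisher, ← integral_add hX hV]
  refine integral_mono (hX.add hV)
    ((hR.bddC1_modifiedFisherDensity lam i).slice_right t).integrable fun z => ?_
  simp only [hR.bddC1Pos.fderiv_slice_right, ← add_div]
  exact div_le_div_of_nonneg_right (sq_add_sq_le_fisherForm (two_le_gradWeight lam) _ _)
    (hR.bddC1Pos.pos _).le

theorem modifiedFisher_le (hR : RegularC2 d h) (lam t : ℝ) :
    modifiedFisher lam h t ≤ (gradWeight lam + 1) * fisherX h t + 3 * fisherV h t := by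
  rw [fisherX, fisherV, modifiedFisher, Finset.mul_sum, Finset.mul_sum, ← Finset.sum_add_distrib]
  refine Finset.sum_le_sum fun i _ => ?_
  have hslice := hR.bddC1Pos_slice t
  have hX := ((hslice.bddCont_sq_fderiv_div (Pi.single i 1, 0)).integrable
    (μ := phaseMeas d)).const_mul (gradWeight lam + 1)
  have hV := ((hslice.bddCont_sq_fderiv_div (0, Pi.single i 1)).integrable
    (μ := phaseMeas d)).const_mul 3
  rw [fisher, fisher, ← integral_const_mul, ← integral_const_mul, ← integral_add hX hV]
  refine integral_mono ((hR.bddC1_modifiedFisherDensity lam i).slice_right t).integrable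
    (hX.add hV) fun z => ?_
  simp only [hR.bddC1Pos.fderiv_slice_right, ← mul_div_assoc, ← add_div]
  exact div_le_div_of_nonneg_right (fisherForm_le _ _ _) (hR.bddC1Pos.pos _).le

theorem Ifull_add_HPi_le_lyapunov (hR : RegularC2 d h) (lam t : ℝ) :
    Ifull d (h t) + entropyWeight lam * HPi d (h t) ≤ lyapunov lam h t := by
  rw [hR.Ifull_eq, lyapunov]
  gcongr
  exact hR.le_modifiedFisher lam t

theorem lyapunov_le (hR : RegularC2 d h) (hlam : 0 < lam) (hmass : intMu d (h t) = 1) :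
    lyapunov lam h t
      ≤ (gradWeight lam + 1) * Ifull d (h t) + 2 * entropyWeight lam * HPi d (h t) := by
  have hV : 3 * fisherV h t ≤ (gradWeight lam + 1) * fisherV h t :=
    mul_le_mul_of_nonneg_right (by linarith [two_le_gradWeight lam]) (hR.fisherV_nonneg t)
  have hHPi := mul_nonneg (entropyWeight_pos hlam).le (HPi_nonneg (hR.bddC1Pos_slice t) hmass)
  rw [hR.Ifull_eq, lyapunov]
  linarith [hR.modifiedFisher_le lam t]

theorem decayRate_mul_lyapunov_le (hR : RegularC2 d h) (hlam : 0 < lam)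
    (hmass : intMu d (h t) = 1) :
    decayRate lam * lyapunov lam h t ≤ 2 * fisherX h t + lam * fisherV h t := by
  have hE : lyapunov lam h t
      ≤ (gradWeight lam + 1 + entropyWeight lam) * fisherX h t + 3 * fisherV h t := by
    have hHPi := mul_le_mul_of_nonneg_left (hR.HPi_le_fisherX hmass) (entropyWeight_pos hlam).le
    rw [lyapunov]
    linarith [hR.modifiedFisher_le lam t]
  calc decayRate lam * lyapunov lam h t
      ≤ decayRate lam
        * ((gradWeight lam + 1 + entropyWeight lam) * fisherX h t + 3 * fisherV h t) :=
        mul_le_mul_of_nonneg_left hE (decayRate_pos hlam).le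
    _ = decayRate lam * (gradWeight lam + 1 + entropyWeight lam) * fisherX h t
        + decayRate lam * 3 * fisherV h t := by ring
    _ ≤ 2 * fisherX h t + lam * fisherV h t :=
        add_le_add (mul_le_mul_of_nonneg_right (decayRate_mul_le hlam) (hR.fisherX_nonneg t))
          (mul_le_mul_of_nonneg_right (decayRate_mul_three_le lam) (hR.fisherV_nonneg t))

theorem lyapunov_le_exp_mul (hR : RegularC2 d h) (hlam : 0 < lam) (hS : SolvesLRB d lam h)
    (hmass : intMu d (h 0) = 1) (ht : 0 ≤ t) :
    lyapunov lam h t ≤ Real.exp (-decayRate lam * t) * lyapunov lam h 0 :=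
  le_exp_mul_of_deriv_le (fun _ hs => (hR.hasDerivAt_lyapunov hS hs).differentiableAt)
    (fun s hs => (hR.deriv_lyapunov_le hlam hS hs).trans <| by
      linarith [hR.decayRate_mul_lyapunov_le hlam (hR.intMu_eq_one hS hmass hs)]) ht

theorem Ifull_add_HPi_le_exp_mul (hR : RegularC2 d h) (hlam : 0 < lam) (hS : SolvesLRB d lam h)
    (hmass : intMu d (h 0) = 1) (ht : 0 ≤ t) :
    Ifull d (h t) + entropyWeight lam * HPi d (h t) ≤ Real.exp (-decayRate lam * t)
      * ((gradWeight lam + 1) * Ifull d (h 0) + 2 * entropyWeight lam * HPi d (h 0)) :=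
  (hR.Ifull_add_HPi_le_lyapunov lam t).trans <|
    (hR.lyapunov_le_exp_mul hlam hS hmass ht).trans <|
      mul_le_mul_of_nonneg_left (hR.lyapunov_le hlam hmass) (Real.exp_pos _).le

theorem Hent_le_exp_mul (hR : RegularC2 d h) (hlam : 0 < lam) (hS : SolvesLRB d lam h)
    (hmass : intMu d (h 0) = 1) (ht : 0 ≤ t) :
    Hent d (h t) ≤ 12 * (gradWeight lam + 1 + 2 * entropyWeight lam)
      * Real.exp (-decayRate lam * t) * Ifull d (h 0) := by
  have hb := (entropyWeight_pos hlam).le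
  have hmasst := hR.intMu_eq_one hS hmass ht
  have hHPi0 : HPi d (h 0) ≤ Ifull d (h 0) := by
    linarith [hR.HPi_le_fisherX hmass, hR.Ifull_eq 0, hR.fisherV_nonneg 0]
  calc Hent d (h t) ≤ 12 * Ifull d (h t) := Hent_le_Ifull (hR.bddC1Pos_slice t) hmasst
    _ ≤ 12 * (Ifull d (h t) + entropyWeight lam * HPi d (h t)) := by
        linarith [mul_nonneg hb (HPi_nonneg (hR.bddC1Pos_slice t) hmasst)]
    _ ≤ 12 * (Real.exp (-decayRate lam * t)
        * ((gradWeight lam + 1) * Ifull d (h 0) + 2 * entropyWeight lam * Ifull d (h 0))) := by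
        grw [hR.Ifull_add_HPi_le_exp_mul hlam hS hmass ht, hHPi0]
    _ = _ := by ring

end RegularC2

theorem linear_relaxation_entropic_hypocoercivity_general (lam : ℝ) (hlam : 0 < lam) :
    ∃ Lam alpha beta gamma : ℝ, 0 < Lam ∧ 0 < alpha ∧ 0 < beta ∧ 0 < gamma ∧
      ∀ (d : ℕ) (h : ℝ → (Fin d → ℝ) → (Fin d → ℝ) → ℝ), RegularC2 d h →
        intMu d (h 0) = 1 → SolvesLRB d lam h → ∀ t : ℝ, 0 ≤ t →
          Ifull d (h t) + beta * HPi d (h t)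
              ≤ Real.exp (-Lam * t) * (alpha * Ifull d (h 0) + 2 * beta * HPi d (h 0)) ∧
          Hent d (h t) ≤ gamma * Real.exp (-Lam * t) * Ifull d (h 0) := by
  have ha := gradWeight_pos lam
  have hb := entropyWeight_pos hlam
  exact ⟨decayRate lam, gradWeight lam + 1, entropyWeight lam,
    12 * (gradWeight lam + 1 + 2 * entropyWeight lam), decayRate_pos hlam, by positivity, hb,
    by positivity, fun d h hR hmass hS t ht =>
      ⟨hR.Ifull_add_HPi_le_exp_mul hlam hS hmass ht, hR.Hent_le_exp_mul hlam hS hmass ht⟩⟩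

/-- Entropic hypocoercivity for the linear relaxation Boltzmann equation:
there are positive constants `Λ, α, β, γ` depending only on `λ` (not on the dimension) such that
any suitably regular normalized solution satisfies
`I(h_t) + β H_Π(h_t) ≤ e^{-Λt} (α I(h_0) + 2β H_Π(h_0))` and `H(h_t) ≤ γ e^{-Λt} I(h_0)`. -/
theorem linear_relaxation_entropic_hypocoercivity (lam : ℝ) (hlam : 0 < lam) :
    ∃ Lam alpha beta gamma : ℝ, 0 < Lam ∧ 0 < alpha ∧ 0 < beta ∧ 0 < gamma ∧
      ∀ (d : ℕ), 1 ≤ d →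
        ∀ h : ℝ → (Fin d → ℝ) → (Fin d → ℝ) → ℝ,
          Regular d h →
          (∀ t, 0 ≤ t → intMu d (h t) = 1) →
          SolvesLRB d lam h →
          ∀ t : ℝ, 0 ≤ t →
            Ifull d (h t) + beta * HPi d (h t)
                ≤ Real.exp (-Lam * t) * (alpha * Ifull d (h 0) + 2 * beta * HPi d (h 0)) ∧
            Hent d (h t) ≤ gamma * Real.exp (-Lam * t) * Ifull d (h 0) := by
  obtain ⟨Lam, alpha, beta, gamma, hLam, halpha, hbeta, hgamma, hdecay⟩ :=
    linear_relaxation_entropic_hypocoercivity_general lam hlam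
  exact ⟨Lam, alpha, beta, gamma, hLam, halpha, hbeta, hgamma, fun d _ h hR hmass =>
    hdecay d h hR.regularC2 (hmass 0 le_rfl)⟩

end
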